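/- Let p be a prime, let X be a set with 2p elements, and let N be the number of orbits of the conjugation action of the symmetric group Sym(X) on the collection of all subsets T ⊆ Sym(X) that contain the identity, are sharply transitive, and are closed under conjugation by their own elements. Then (p−1)·N = (p−1)·(p−2) + (p−1)·I_{p−1} + Σ_{d=1}^{p−1} I_{p−1,d}; equivalently, the number of isomorphism classes of RCC loops of order 2p (including groups) equals p − 2 + I_{p−1} + (1/(p−1))·Σ_{d=1}^{p−1} I_{p−1,d}. -/

import Mathlib

open Pointwise

/-- The standard `n`-cycle `x ↦ x + 1` on `ℤ/nℤ`. -/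
def stdCycle (n : ℕ) : Equiv.Perm (ZMod n) := Equiv.addRight (1 : ZMod n)

/-- `I_{n,d}`: the number of `τ ∈ S_n` with `τ² = 1` commuting with `ζ^d`, where `ζ` is the
standard `n`-cycle (one more than the number of involutions in the centralizer of `ζ^d`). -/
noncomputable def Icd (n d : ℕ) : ℕ :=
  Nat.card {τ : Equiv.Perm (ZMod n) // τ ^ 2 = 1 ∧ Commute τ (stdCycle n ^ d)}

/-!
Let `T` encode an RCC loop on `2p` points; the group `G` generated by `T` normalizes `T` and is
transitive, so it has elements of order `p`. First, `T` has a block of size `p`. If an element `g`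
of order `p` in `G` has a fixed point, it moves exactly `p` points, and these form a block because
at least `p` members of `T` commute with `g`. Otherwise `g` is the shift `x ↦ x + 1` of two copies
of `ZMod p`. Let `S` consist of the members of `T` commuting with it. If `S` preserves the copies,
or if `T` normalizes the group of shifts, the copies are blocks. Otherwise pick `t` in `T` not
normalizing it; then `S` has `p` elements and `T \ S` is the orbit of `t` under conjugation by
shifts. For odd `p` one may assume that `G` contains the swap of the copies; it
commutes with `t`, and the elements of `S` other than `1` and the swap are conjugate to `t`, hence
all shifts or all of the form swap times shift. The sum over `S` of the first coordinate of
`s (0, false)` vanishes, so the swap is not in `S`, and each of the two cases is contradictory.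

On each of the two blocks `T` induces an RCC loop of prime order, which is cyclic. Hence the members
of `T` are the translations by `(a, f a)` and the crossings `x ↦ M b * x + b`, `x ↦ N b * x + c b`.
Closure under conjugation makes `M` and `N` constant and `c` affine, and a change of coordinates
leads to `M = N = m`, `f = c = id` with `m ≠ 0, -1`, or to `M = N = 1` and `c b = k - b` with `f` an
involution fixing `0`. The first family contributes `p - 2` classes. In the second, `(f, k)` matters
up to the action of the units `r`, which conjugate `f` by the multiplication by `r` and send `k` to
`r * k`. By Burnside's lemma the number of classes is the average over `r` of the number of fixed
pairs. The multiplication by a primitive root is a `(p - 1)`-cycle on the units, so its power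
`r = ζ ^ d` fixes `I_{p-1,d}` maps `f`; it fixes only `k = 0`, except that `r = 1` fixes all `p`
values of `k`, which accounts for the extra `(p - 1) I_{p-1}`.
-/

open Equiv (Perm)
open Set (MapsTo)

/-- `T` encodes an RCC loop on `X`: it contains the identity, is sharply transitive, and is closed
under conjugation by its own elements. -/
structure IsRCC {X : Type*} (T : Set (Perm X)) : Prop where
  one_mem : 1 ∈ T
  existsUnique_apply : ∀ x y : X, ∃! t, t ∈ T ∧ t x = y
  inv_mul_mul_mem : ∀ s ∈ T, ∀ t ∈ T, t⁻¹ * s * t ∈ T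

/-- `O` is a block for the set `T` of permutations: every member of `T` maps `O` either into itself
or into its complement. -/
def IsBlockFor {X : Type*} (T : Set (Perm X)) (O : Set X) : Prop :=
  ∀ t ∈ T, MapsTo t O O ∨ MapsTo t O Oᶜ

section Counting

variable {X : Type*} {p : ℕ}

theorem dvd_ncard_setOf_apply_ne [Finite X] [Fact p.Prime] {g : Perm X} (hg : g ^ p = 1) :
    p ∣ {x | g x ≠ x}.ncard := by
  classical
  have := Fintype.ofFinite X
  have hmod := Equiv.Perm.card_compl_support_modEq (σ := g) (p := p) (n := 1) (by rwa [pow_one])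
  rw [show {x | g x ≠ x} = g.support by ext; simp, Set.ncard_coe_finset]
  have hdvd := (Nat.modEq_iff_dvd' (Finset.card_le_univ _)).1 hmod
  rwa [Finset.card_compl, Nat.sub_sub_self (Finset.card_le_univ _)] at hdvd

theorem le_ncard_setOf_apply_ne [Finite X] [Fact p.Prime] {g : Perm X} (hg : orderOf g = p) :
    p ≤ {x | g x ≠ x}.ncard := by
  refine Nat.le_of_dvd ((Set.ncard_pos (Set.toFinite _)).2 ?_)
    (dvd_ncard_setOf_apply_ne (hg ▸ pow_orderOf_eq_one g))
  by_contra! hempty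
  have h1 : g = 1 := Equiv.ext fun x => by
    simpa using Set.eq_empty_iff_forall_notMem.1 hempty x
  exact (Fact.out : p.Prime).one_lt.ne' (by rw [← hg, h1, orderOf_one])

theorem zmod_induction_add [Fact p.Prime] {P : ZMod p → Prop} {d : ZMod p} (hd : d ≠ 0)
    (hstep : ∀ x, P x → P (x + d)) {b : ZMod p} (hb : P b) (x : ZMod p) : P x := by
  have hmul (n : ℕ) : P (b + n * d) := by
    induction n with
    | zero => simpa using hb
    | succ n ih => simpa [add_mul, add_assoc] using hstep _ ih
  have h := hmul ((x - b) / d).val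
  rwa [ZMod.natCast_zmod_val, div_mul_cancel₀ _ hd, add_sub_cancel] at h

theorem ncard_modEq_ncard_commute {G : Type*} [Group G] [Fact p.Prime] {g : G} (hg : g ^ p = 1)
    {T : Set G} (hfin : T.Finite) (hT : ∀ t ∈ T, g * t * g⁻¹ ∈ T) :
    T.ncard ≡ {t ∈ T | Commute g t}.ncard [MOD p] := by
  classical
  have := hfin.fintype
  let f : Function.End T := fun t => ⟨g * t * g⁻¹, hT t t.2⟩
  have hf (n : ℕ) (t : T) : ((f ^ n) t : G) = g ^ n * t * (g ^ n)⁻¹ := by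
    induction n with
    | zero => rw [pow_zero, pow_zero, inv_one, mul_one, one_mul]; rfl
    | succ n ih =>
      rw [pow_succ' f]
      change g * ((f ^ n) t : G) * g⁻¹ = _
      rw [ih, pow_succ']
      group
  have h := Equiv.Perm.card_fixedPoints_modEq (f := f) (p := p) (n := 1)
    (funext fun t => Subtype.ext (by rw [pow_one, hf, hg, inv_one, mul_one, one_mul]; rfl))
  have hfix : {t ∈ T | Commute g t} = Subtype.val '' f.fixedPoints := by
    ext t
    simp [f, Function.IsFixedPt, mul_inv_eq_iff_eq_mul, Commute, SemiconjBy, and_comm]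
  rw [hfix, Set.ncard_image_of_injective _ Subtype.val_injective, ← Nat.card_coe_set_eq,
    ← Nat.card_coe_set_eq, Nat.card_eq_fintype_card, Nat.card_eq_fintype_card]
  exact h

theorem exists_zmod_prod_equiv {ι : Type*} [Finite X] [Finite ι] [hp : Fact p.Prime] {g : Perm X}
    (hg : g ^ p = 1) (hfix : ∀ x, g x ≠ x) (hcard : Nat.card X = p * Nat.card ι) :
    ∃ E : ZMod p × ι ≃ X, ∀ x i, E (x + 1, i) = g (E (x, i)) := by
  let Q := Quotient (Equiv.Perm.SameCycle.setoid g)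
  let F : ZMod p × Q → X := fun z => (g ^ z.1.val) z.2.out
  have hperiod (x : X) : Function.minimalPeriod g x = p :=
    Function.minimalPeriod_eq_prime_iff.2
      ⟨by rw [Function.IsPeriodicPt, Function.IsFixedPt, ← Equiv.Perm.coe_pow, hg]; rfl, hfix x⟩
  have hF : Function.Bijective F := by
    refine ⟨?_, fun x => ?_⟩
    · rintro ⟨i, q⟩ ⟨j, r⟩ h
      have hqr : q = r := by
        have h' : Equiv.Perm.SameCycle g q.out r.out := by
          rw [← Equiv.Perm.sameCycle_pow_left (n := i.val),
            ← Equiv.Perm.sameCycle_pow_right (n := j.val)]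
          exact ⟨0, h⟩
        rw [← q.out_eq, ← r.out_eq]
        exact Quotient.sound h'
      subst hqr
      simp only [F, Equiv.Perm.coe_pow] at h
      rw [Function.iterate_eq_iterate_iff_of_lt_minimalPeriod] at h
      · rw [ZMod.val_injective p h]
      all_goals rw [hperiod]; exact ZMod.val_lt _
    · obtain ⟨n, hn⟩ := (Quotient.mk_out (s := Equiv.Perm.SameCycle.setoid g) x).exists_nat_pow_eq
      refine ⟨(n, ⟦x⟧), ?_⟩
      simp only [F, ZMod.val_natCast]
      rw [← pow_eq_pow_mod n hg, hn]
  have hQ : Nat.card ι = Nat.card Q := by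
    have h := Nat.card_congr (Equiv.ofBijective F hF)
    rw [Nat.card_prod, Nat.card_zmod, hcard] at h
    exact (Nat.eq_of_mul_eq_mul_left hp.out.pos h).symm
  have hsucc (i : ZMod p) : g ^ (i + 1).val = g * g ^ i.val := by
    rw [ZMod.val_add, ZMod.val_one, ← pow_eq_pow_mod _ hg, pow_succ']
  obtain ⟨e⟩ := Finite.card_eq.1 hQ
  exact ⟨((Equiv.refl _).prodCongr e).trans (Equiv.ofBijective F hF),
    fun i b => congrArg (fun h : Perm X => h (e b).out) (hsucc i)⟩

end Counting

namespace IsRCC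

variable {X : Type*} {T : Set (Perm X)} {p : ℕ}

theorem eq_of_apply_eq (h : IsRCC T) {s t : Perm X} (hs : s ∈ T) (ht : t ∈ T) {x : X}
    (e : s x = t x) : s = t :=
  (h.existsUnique_apply x (t x)).unique ⟨hs, e⟩ ⟨ht, rfl⟩

theorem exists_apply_eq (h : IsRCC T) (x y : X) : ∃ t ∈ T, t x = y :=
  (h.existsUnique_apply x y).exists

theorem bijOn_apply (h : IsRCC T) (x : X) (O : Set X) :
    Set.BijOn (fun t : Perm X => t x) {t ∈ T | t x ∈ O} O := by
  refine ⟨fun t ht => ht.2, fun s hs t ht e => h.eq_of_apply_eq hs.1 ht.1 e, fun y hy => ?_⟩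
  obtain ⟨t, ht, rfl⟩ := h.exists_apply_eq x y
  exact ⟨t, ⟨ht, hy⟩, rfl⟩

theorem ncard_apply_mem (h : IsRCC T) (x : X) (O : Set X) :
    {t ∈ T | t x ∈ O}.ncard = O.ncard :=
  (h.bijOn_apply x O).ncard_eq

theorem ncard_eq [Nonempty X] (h : IsRCC T) : T.ncard = Nat.card X := by
  simpa [Set.ncard_univ] using h.ncard_apply_mem (Classical.arbitrary X) Set.univ

theorem conj_mem [Finite X] (h : IsRCC T) {g : Perm X} (hg : g ∈ Subgroup.closure T)
    {s : Perm X} (hs : s ∈ T) : g * s * g⁻¹ ∈ T := by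
  have hinv (t : Perm X) (ht : t ∈ T) : t⁻¹ ∈ Subgroup.normalizer T :=
    Subgroup.mem_normalizer_fintype fun s hs => by simpa using h.inv_mul_mul_mem s hs t ht
  have hle : Subgroup.closure T ≤ Subgroup.normalizer T :=
    (Subgroup.closure_le _).2 fun t ht => inv_mem_iff.1 (hinv t ht)
  exact (Subgroup.mem_set_normalizer_iff.1 (hle hg) s).1 hs

theorem isBlockFor_of_ncard_le [Finite X] (h : IsRCC T) {O : Set X}
    (hO : O.ncard ≤ {t ∈ T | MapsTo t O O}.ncard) : IsBlockFor T O := by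
  intro t ht
  by_contra! hc
  obtain ⟨hnot, hmeet⟩ := hc
  obtain ⟨x, hx, htx⟩ : ∃ x ∈ O, t x ∈ O := by
    simpa [MapsTo] using hmeet
  have hsub : {t ∈ T | MapsTo t O O} ⊆ {t ∈ T | t x ∈ O} := fun s hs => ⟨hs.1, hs.2 hx⟩
  have heq := Set.eq_of_subset_of_ncard_le hsub (by rwa [h.ncard_apply_mem]) (Set.toFinite _)
  exact hnot (heq.ge ⟨ht, htx⟩).2

theorem exists_prime_order [Finite X] [Nonempty X] [Fact p.Prime] (h : IsRCC T)
    (hp : p ∣ Nat.card X) : ∃ g ∈ Subgroup.closure T, orderOf g = p := by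
  let G := Subgroup.closure T
  have : MulAction.IsPretransitive G X := ⟨fun x y =>
    let ⟨t, ht, e⟩ := h.exists_apply_eq x y
    ⟨⟨t, Subgroup.subset_closure ht⟩, e⟩⟩
  have hdvd : p ∣ Nat.card G := by
    rw [← MulAction.index_stabilizer_of_transitive G (Classical.arbitrary X)] at hp
    exact hp.trans (Subgroup.index_dvd_card _)
  obtain ⟨g, hg⟩ := exists_prime_orderOf_dvd_card' p hdvd
  exact ⟨g, g.2, by rwa [Subgroup.orderOf_coe]⟩

theorem le_ncard_commute [Finite X] [Nonempty X] [Fact p.Prime] (h : IsRCC T)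
    (hp : p ∣ Nat.card X) {g : Perm X} (hg : g ∈ Subgroup.closure T) (hgp : g ^ p = 1) :
    p ≤ {t ∈ T | Commute g t}.ncard := by
  have hmod := ncard_modEq_ncard_commute hgp T.toFinite fun t ht => h.conj_mem hg ht
  rw [h.ncard_eq] at hmod
  have hpos : 0 < {t ∈ T | Commute g t}.ncard :=
    (Set.ncard_pos (Set.toFinite _)).2 ⟨1, h.one_mem, Commute.one_right g⟩
  exact Nat.le_of_dvd hpos ((hmod.dvd_iff dvd_rfl).1 hp)

theorem exists_equiv_zmod [Fact p.Prime] (h : IsRCC T) (hX : Nat.card X = p) :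
    ∃ e : ZMod p ≃ X, ∀ t ∈ T, ∃ a, ∀ x, t (e x) = e (x + a) := by
  have hp : p.Prime := Fact.out
  obtain ⟨_, _⟩ := Nat.card_pos_iff.1 (hX ▸ hp.pos)
  obtain ⟨g, hg, hgo⟩ := h.exists_prime_order (p := p) hX.symm.dvd
  have hgp : g ^ p = 1 := hgo ▸ pow_orderOf_eq_one g
  have hcomm : {t ∈ T | Commute g t} = T := Set.eq_of_subset_of_ncard_le (Set.sep_subset _ _)
    (by rw [h.ncard_eq, hX]; exact h.le_ncard_commute hX.symm.dvd hg hgp)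
  have hmoved : {x | g x ≠ x} = Set.univ := Set.eq_of_subset_of_ncard_le (Set.subset_univ _)
    (by rw [Set.ncard_univ, hX]; exact le_ncard_setOf_apply_ne hgo)
  obtain ⟨E, hE⟩ :=
    exists_zmod_prod_equiv (ι := Unit) hgp (fun x => hmoved.ge trivial) (by simp [hX])
  refine ⟨(Equiv.prodUnique _ _).symm.trans E, fun t ht => ⟨(E.symm (t (E (0, ())))).1, ?_⟩⟩
  refine zmod_induction_add one_ne_zero (fun x hx => ?_) (b := 0) ?_
  · have hgt : Commute g t := (hcomm.ge ht).2
    change t (E (x, ())) = E (x + _, ()) at hx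
    change t (E (x + 1, ())) = E (x + 1 + _, ())
    rw [hE, add_right_comm, hE, ← hx, ← Equiv.Perm.mul_apply, ← hgt.eq, Equiv.Perm.mul_apply]
  · change t (E (0, ())) = E (0 + _, ())
    rw [zero_add, E.apply_symm_apply]

theorem exists_isBlockFor_of_fixed [Fact p.Prime] (h : IsRCC T) (hX : Nat.card X = 2 * p)
    {g : Perm X} (hg : g ∈ Subgroup.closure T) (hgo : orderOf g = p) {x : X} (hx : g x = x) :
    ∃ O : Set X, O.ncard = p ∧ IsBlockFor T O := by
  have hp : p.Prime := Fact.out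
  obtain ⟨_, _⟩ := Nat.card_pos_iff.1 (hX ▸ mul_pos two_pos hp.pos)
  have hgp : g ^ p = 1 := hgo ▸ pow_orderOf_eq_one g
  have hcard : {y | g y ≠ y}.ncard = p := by
    have hlt : {y | g y ≠ y}.ncard < p * 2 := by
      rw [mul_comm, ← hX, ← Set.ncard_univ]
      exact Set.ncard_lt_ncard (Set.ssubset_univ_iff.2 fun hu => hu.ge (Set.mem_univ x) hx)
    exact Nat.eq_of_dvd_of_lt_two_mul
      (hp.pos.trans_le (le_ncard_setOf_apply_ne hgo)).ne' (dvd_ncard_setOf_apply_ne hgp)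
      (by omega)
  refine ⟨{y | g y ≠ y}, hcard, h.isBlockFor_of_ncard_le ?_⟩
  rw [hcard]
  refine (h.le_ncard_commute (hX ▸ dvd_mul_left p 2) hg hgp).trans (Set.ncard_le_ncard ?_)
  rintro t ⟨ht, hgt⟩
  refine ⟨ht, fun y hy hty => hy (t.injective ?_)⟩
  rwa [← Equiv.Perm.mul_apply, ← hgt.eq]

end IsRCC

section Transport

variable {X Y : Type*} {T : Set (Perm X)}

theorem IsRCC.image (h : IsRCC T) (e : X ≃ Y) : IsRCC (e.permCongr '' T) where
  one_mem := ⟨1, h.one_mem, map_one e.permCongrHom⟩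
  existsUnique_apply x y := by
    obtain ⟨t, ⟨ht, hxy⟩, huniq⟩ := h.existsUnique_apply (e.symm x) (e.symm y)
    refine ⟨e.permCongr t, ⟨⟨t, ht, rfl⟩, by simp [hxy]⟩, ?_⟩
    rintro _ ⟨⟨s, hs, rfl⟩, hsxy⟩
    rw [huniq s ⟨hs, by simp [← hsxy]⟩]
  inv_mul_mul_mem := by
    rintro _ ⟨s, hs, rfl⟩ _ ⟨t, ht, rfl⟩
    refine ⟨t⁻¹ * s * t, h.inv_mul_mul_mem s hs t ht, ?_⟩
    change e.permCongrHom (t⁻¹ * s * t) = (e.permCongrHom t)⁻¹ * _ * _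
    rw [map_mul, map_mul, map_inv]
    rfl

theorem IsBlockFor.preimage {e : X ≃ Y} {O : Set Y} (h : IsBlockFor (e.permCongr '' T) O) :
    IsBlockFor T (e ⁻¹' O) := by
  intro t ht
  refine (h _ ⟨t, ht, rfl⟩).imp (fun hmaps x hx => ?_) (fun hmaps x hx => ?_) <;>
  simpa using hmaps hx

theorem permCongr_mem_closure_image (e : X ≃ Y) {g : Perm X} :
    e.permCongr g ∈ Subgroup.closure (e.permCongr '' T) ↔ g ∈ Subgroup.closure T := by
  have h := MonoidHom.map_closure e.permCongrHom.toMonoidHom T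
  change _ = Subgroup.closure (e.permCongr '' T) at h
  rw [← h]
  exact Subgroup.mem_map_iff_mem e.permCongrHom.injective

end Transport

/-- The permutation of `A × Bool` exchanging the two copies of `A`. -/
def swapSides (A : Type*) : Perm (A × Bool) :=
  (Equiv.refl A).prodCongr Equiv.boolNot

@[simp]
theorem swapSides_apply {A : Type*} (x : A) (i : Bool) : swapSides A (x, i) = (x, !i) := rfl

theorem swapSides_mul_self (A : Type*) : swapSides A * swapSides A = 1 :=
  Equiv.ext fun z => by
    rw [Equiv.Perm.mul_apply, swapSides_apply, swapSides_apply, Bool.not_not]; rfl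

section Shift

variable {A ι : Type*} [AddCommGroup A]

/-- The permutation `(x, i) ↦ (x + a, i)` of `A × ι`. -/
def shift (a : A) : Perm (A × ι) :=
  Equiv.prodCongrLeft fun _ => Equiv.addRight a

@[simp]
theorem shift_apply (a x : A) (i : ι) : shift a (x, i) = (x + a, i) := rfl

theorem shift_zero : shift (0 : A) = (1 : Perm (A × ι)) :=
  Equiv.ext fun z => by rw [shift_apply, add_zero]; rfl

theorem shift_mul_shift (a b : A) : (shift a * shift b : Perm (A × ι)) = shift (a + b) :=
  Equiv.ext fun z => by
    rw [Equiv.Perm.mul_apply, shift_apply, shift_apply, shift_apply, add_assoc, add_comm b]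

theorem commute_shift_shift (a b : A) : Commute (shift a : Perm (A × ι)) (shift b) := by
  rw [commute_iff_eq, shift_mul_shift, shift_mul_shift, add_comm]

theorem inv_shift (a : A) : (shift a : Perm (A × ι))⁻¹ = shift (-a) := by
  rw [inv_eq_iff_mul_eq_one, shift_mul_shift, add_neg_cancel, shift_zero]

theorem shift_pow (a : A) (n : ℕ) : (shift a : Perm (A × ι)) ^ n = shift (n • a) := by
  induction n with
  | zero => rw [pow_zero, zero_nsmul, shift_zero]
  | succ n ih => rw [pow_succ, ih, shift_mul_shift, succ_nsmul]

theorem commute_swapSides_shift (a : A) : Commute (swapSides A) (shift a) :=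
  Equiv.ext fun _ => rfl

end Shift

section ShiftZMod

variable {ι : Type*} {p : ℕ} [Fact p.Prime]

theorem shift_eq_pow (a b : ZMod p) (ha : a ≠ 0) :
    (shift b : Perm (ZMod p × ι)) = shift a ^ (b / a).val := by
  rw [shift_pow, nsmul_eq_mul, ZMod.natCast_zmod_val, div_mul_cancel₀ _ ha]

theorem shift_mem {G : Subgroup (Perm (ZMod p × ι))} (h : shift 1 ∈ G) (a : ZMod p) :
    shift a ∈ G := by
  rw [shift_eq_pow 1 a one_ne_zero]
  exact pow_mem h _

theorem shift_pow_prime (a : ZMod p) : (shift a : Perm (ZMod p × ι)) ^ p = 1 := by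
  rw [shift_pow, nsmul_eq_mul, CharP.cast_eq_zero, zero_mul, shift_zero]

theorem semiconjBy_shift {t : Perm (ZMod p × ι)} {a c : ZMod p} (ha : a ≠ 0)
    (h : SemiconjBy t (shift a) (shift c)) (x : ZMod p) :
    SemiconjBy t (shift x) (shift (x / a * c)) := by
  have hpow := h.pow_right (x / a).val
  rwa [← shift_eq_pow a x ha, shift_pow, nsmul_eq_mul, ZMod.natCast_zmod_val] at hpow

theorem commute_shift {t : Perm (ZMod p × ι)} {a : ZMod p} (ha : a ≠ 0)
    (h : Commute t (shift a)) (x : ZMod p) : Commute t (shift x) := by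
  have hx := semiconjBy_shift ha h x
  rwa [div_mul_cancel₀ x ha] at hx

theorem apply_eq_shift_of_semiconjBy {t : Perm (ZMod p × ι)} {c : ZMod p}
    (h : SemiconjBy t (shift 1) (shift c)) (x : ZMod p) (i : ι) :
    t (x, i) = shift (x * c) (t (0, i)) := by
  have hx := (semiconjBy_shift one_ne_zero h x).eq
  rw [div_one] at hx
  rw [← Equiv.Perm.mul_apply, ← hx, Equiv.Perm.mul_apply, shift_apply, zero_add]

theorem isBlockFor_of_semiconjBy_shift {T : Set (Perm (ZMod p × ι))}
    (hT : ∀ t ∈ T, ∃ c, SemiconjBy t (shift 1) (shift c)) (i : ι) :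
    IsBlockFor T {z | z.2 = i} := by
  intro t ht
  obtain ⟨c, hc⟩ := hT t ht
  have hside (z : ZMod p × ι) (hz : z.2 = i) : (t z).2 = (t (0, i)).2 := by
    obtain ⟨x, _⟩ := z
    subst hz
    rw [apply_eq_shift_of_semiconjBy hc]
    rfl
  by_cases hi : (t (0, i)).2 = i
  · exact .inl fun z hz => (hside z hz).trans hi
  · exact .inr fun z hz hz' => hi ((hside z hz).symm.trans hz')

end ShiftZMod

theorem ncard_snd_eq_false {p : ℕ} : {z : ZMod p × Bool | z.2 = false}.ncard = p := by
  have hrange : {z : ZMod p × Bool | z.2 = false} = Set.range fun x => (x, false) :=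
    Set.ext fun z => ⟨fun hz => ⟨z.1, Prod.ext rfl hz.symm⟩, by rintro ⟨x, rfl⟩; rfl⟩
  rw [hrange, ← Nat.card_coe_set_eq, Nat.card_range_of_injective (Prod.mk_left_injective false),
    Nat.card_zmod]

section FreeShift

variable {p : ℕ} [hp : Fact p.Prime]

/-- `G` is a permutation group all of whose elements of order `p` are fixed-point-free. -/
def FreeAtPrime {X : Type*} (p : ℕ) (G : Subgroup (Perm X)) : Prop :=
  ∀ g ∈ G, orderOf g = p → ∀ x, g x ≠ x

theorem snd_apply_true_of_commute {t : Perm (ZMod p × Bool)} (ht : Commute t (shift 1)) :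
    (t (0, true)).2 = !(t (0, false)).2 := by
  rw [Bool.eq_not]
  intro h
  have hinj : t ((t (0, true)).1 - (t (0, false)).1, false) = t (0, true) := by
    rw [apply_eq_shift_of_semiconjBy ht]
    refine Prod.ext ?_ h.symm
    simp [shift]
  simpa using congrArg Prod.snd (t.injective hinj)

theorem eq_shift_of_commute {G : Subgroup (Perm (ZMod p × Bool))} (hG : FreeAtPrime p G)
    (hshift : shift 1 ∈ G) {t : Perm (ZMod p × Bool)} (htG : t ∈ G) (ht : Commute t (shift 1))
    (hside : (t (0, false)).2 = false) : t = shift (t (0, false)).1 := by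
  set a := (t (0, false)).1
  set s := shift (-a) * t with hs
  have hsG : s ∈ G := G.mul_mem (shift_mem hshift _) htG
  have hscomm : Commute s (shift 1) := (commute_shift_shift (-a) 1).mul_left ht
  have hfix : s (0, false) = (0, false) :=
    Prod.ext (by simp [s, shift, a]) hside
  obtain ⟨d, hd⟩ : ∃ d, s (0, true) = (d, true) :=
    ⟨_, Prod.ext rfl (by rw [snd_apply_true_of_commute hscomm, hfix]; rfl)⟩
  have hs_apply (x : ZMod p) (i : Bool) : s (x, i) = (x + if i then d else 0, i) := by
    rw [apply_eq_shift_of_semiconjBy hscomm]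
    cases i <;> simp [hfix, hd, add_comm]
  have hpow (n : ℕ) (x : ZMod p) (i : Bool) : (s ^ n) (x, i) = (x + n * if i then d else 0, i) := by
    induction n with
    | zero => simp
    | succ n ih =>
      rw [pow_succ', Equiv.Perm.mul_apply, ih, hs_apply, Nat.cast_succ, add_one_mul, add_assoc]
  have hsp : s ^ p = 1 := Equiv.ext fun z => by
    rw [hpow, CharP.cast_eq_zero, zero_mul, add_zero]
    rfl
  have hs1 : s = 1 := by_contra fun h1 => hG s hsG (orderOf_eq_prime hsp h1) _ hfix
  rwa [hs, ← inv_shift, inv_mul_eq_one, eq_comm] at hs1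

theorem eq_shift_or_eq_swapSides_mul_shift {G : Subgroup (Perm (ZMod p × Bool))}
    (hG : FreeAtPrime p G) (hshift : shift 1 ∈ G) (hswap : swapSides (ZMod p) ∈ G)
    {t : Perm (ZMod p × Bool)} (htG : t ∈ G) (ht : Commute t (shift 1)) :
    ∃ a, t = shift a ∨ t = swapSides (ZMod p) * shift a := by
  cases hside : (t (0, false)).2
  · exact ⟨_, .inl (eq_shift_of_commute hG hshift htG ht hside)⟩
  · have h := eq_shift_of_commute hG hshift (G.mul_mem hswap htG)
      ((commute_swapSides_shift 1).mul_left ht) (by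
        change (!(t (0, false)).2) = false
        rw [hside]; rfl)
    refine ⟨((swapSides (ZMod p) * t) (0, false)).1, .inr ?_⟩
    rw [← h, ← mul_assoc, swapSides_mul_self, one_mul]

theorem isBlockFor_of_commute_imp {T : Set (Perm (ZMod p × Bool))} (h : IsRCC T)
    (hshift : shift 1 ∈ Subgroup.closure T)
    (hside : ∀ t ∈ T, Commute t (shift 1) → (t (0, false)).2 = false) :
    IsBlockFor T {z | z.2 = false} := by
  refine h.isBlockFor_of_ncard_le ?_
  rw [ncard_snd_eq_false]
  refine (h.le_ncard_commute ⟨2, by simp⟩ hshift (shift_pow_prime 1)).trans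
    (Set.ncard_le_ncard ?_)
  rintro t ⟨ht, htg⟩
  refine ⟨ht, fun z hz => ?_⟩
  obtain ⟨x, i⟩ := z
  obtain rfl : i = false := hz
  rw [apply_eq_shift_of_semiconjBy htg.symm]
  exact hside t ht htg.symm

theorem conj_shift_injective {ι : Type*} {t : Perm (ZMod p × ι)} (htg : ¬ Commute t (shift 1)) :
    Function.Injective fun a : ZMod p => shift a * t * (shift a)⁻¹ := by
  intro a b (hab : shift a * t * (shift a)⁻¹ = shift b * t * (shift b)⁻¹)
  by_contra hne
  refine htg (commute_shift (sub_ne_zero.2 hne) ?_ 1)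
  have hsplit : (shift a : Perm (ZMod p × ι)) = shift b * shift (a - b) := by
    rw [shift_mul_shift, add_sub_cancel]
  refine Commute.symm (mul_inv_eq_iff_eq_mul.1 ?_)
  calc shift (a - b) * t * (shift (a - b))⁻¹
    _ = (shift b)⁻¹ * (shift a * t * (shift a)⁻¹) * shift b := by rw [hsplit]; group
    _ = t := by rw [hab]; group

theorem eq_range_conj_shift {ι : Type*} {N : Set (Perm (ZMod p × ι))} (hN : N.ncard = p)
    (hconj : ∀ a, ∀ s ∈ N, shift a * s * (shift a)⁻¹ ∈ N) {t : Perm (ZMod p × ι)} (ht : t ∈ N)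
    (htg : ¬ Commute t (shift 1)) :
    N = Set.range fun a : ZMod p => shift a * t * (shift a)⁻¹ := by
  symm
  refine Set.eq_of_subset_of_ncard_le (Set.range_subset_iff.2 fun a => hconj a t ht) ?_
    (Set.finite_of_ncard_ne_zero (by rw [hN]; exact hp.out.ne_zero))
  rw [hN, ← Nat.card_coe_set_eq, Nat.card_range_of_injective (conj_shift_injective htg),
    Nat.card_zmod]

theorem two_ne_zero_of_prime_ne_two (hp2 : p ≠ 2) : (2 : ZMod p) ≠ 0 :=
  Ring.two_ne_zero (by rwa [ZMod.ringChar_zmod_n])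

theorem sum_zmod_eq_zero (hp2 : p ≠ 2) : ∑ x : ZMod p, x = 0 := by
  have h := FiniteField.sum_pow_lt_card_sub_one (ZMod p) 1 (by
    have := hp.out.two_le
    rw [ZMod.card]
    omega)
  simpa only [pow_one] using h

theorem commute_swapSides_of_conj_eq (hp2 : p ≠ 2) {t : Perm (ZMod p × Bool)}
    (htg : ¬ Commute t (shift 1)) {i j : ZMod p}
    (hconj : swapSides (ZMod p) * shift j * t * (swapSides (ZMod p) * shift j)⁻¹ =
      shift i * t * (shift i)⁻¹) :
    Commute (swapSides (ZMod p)) t := by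
  set v := swapSides (ZMod p) * shift (j - i) with hv
  have hvsplit : swapSides (ZMod p) * shift j = shift i * v := by
    rw [hv, ← (commute_swapSides_shift i).left_comm, shift_mul_shift, add_sub_cancel]
  have hvt : Commute v t := mul_inv_eq_iff_eq_mul.1 <| calc
    v * t * v⁻¹ = (shift i)⁻¹ * (swapSides (ZMod p) * shift j * t *
        (swapSides (ZMod p) * shift j)⁻¹) * shift i := by rw [hvsplit]; group
    _ = t := by rw [hconj]; group
  have hvv : v * v = shift (2 * (j - i)) := by
    rw [hv, (commute_swapSides_shift _).symm.mul_mul_mul_comm, swapSides_mul_self, one_mul,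
      shift_mul_shift, two_mul]
  have hij : j - i = 0 := by
    by_contra hne
    refine htg (commute_shift (mul_ne_zero (two_ne_zero_of_prime_ne_two hp2) hne) ?_ 1)
    rw [← hvv]
    exact (hvt.mul_left hvt).symm
  rwa [hv, hij, shift_zero, mul_one] at hvt

theorem sum_fst_apply_false_eq_zero (hp2 : p ≠ 2) {t : Perm (ZMod p × Bool)}
    (ht : Commute (swapSides (ZMod p)) t) : ∑ x, (t (x, false)).1 = 0 := by
  have hside (x : ZMod p) : (t (x, true)).1 = (t (x, false)).1 :=
    (congrArg Prod.fst (Equiv.congr_fun ht.eq (x, false))).symm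
  have htotal : ∑ z, (t z).1 = 2 * ∑ x, (t (x, false)).1 := by
    simp only [Fintype.sum_prod_type, Fintype.sum_bool, hside, Finset.sum_add_distrib, two_mul]
  have hzero : ∑ z, (t z).1 = 0 := by
    rw [Equiv.sum_comp t Prod.fst, Fintype.sum_prod_type_right]
    simp only [sum_zmod_eq_zero hp2, Finset.sum_const_zero]
  exact (mul_eq_zero.1 (htotal.symm.trans hzero)).resolve_left (two_ne_zero_of_prime_ne_two hp2)

theorem finsum_mem_eq_zero_of_range_conj_shift (hp2 : p ≠ 2) {T S : Set (Perm (ZMod p × Bool))}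
    (h : IsRCC T) (hST : S ⊆ T) {t : Perm (ZMod p × Bool)} (htg : ¬ Commute t (shift 1))
    (hwt : Commute (swapSides (ZMod p)) t)
    (hN : T \ S = Set.range fun a : ZMod p => shift a * t * (shift a)⁻¹) :
    ∑ᶠ s ∈ S, (s (0, false)).1 = 0 := by
  have hT : ∑ᶠ s ∈ T, (s (0, false)).1 = 0 := by
    have hbij := h.bijOn_apply (0, false) Set.univ
    simp only [Set.mem_univ, and_true, Set.ofPred_mem_eq] at hbij
    rw [finsum_mem_eq_of_bijOn _ hbij fun s _ => rfl, finsum_mem_univ, finsum_eq_sum_of_fintype,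
      Fintype.sum_prod_type_right]
    simp only [sum_zmod_eq_zero hp2, Finset.sum_const_zero]
  have hdiff : ∑ᶠ s ∈ T \ S, (s (0, false)).1 = 0 := by
    rw [hN, finsum_mem_range (conj_shift_injective htg), finsum_eq_sum_of_fintype]
    calc ∑ a : ZMod p, ((shift a * t * (shift a)⁻¹ : Perm (ZMod p × Bool)) (0, false)).1
      _ = ∑ a, ((t (-a, false)).1 + a) := by
        simp only [inv_shift, Equiv.Perm.mul_apply, shift_apply, zero_add]
        rfl
      _ = ∑ a, (t (a, false)).1 + ∑ a : ZMod p, a := by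
        rw [Finset.sum_add_distrib,
          ← Equiv.sum_comp (Equiv.neg (ZMod p)) fun a => (t (a, false)).1]
        rfl
      _ = 0 := by rw [sum_fst_apply_false_eq_zero hp2 hwt, sum_zmod_eq_zero hp2, add_zero]
  rw [← finsum_mem_add_sdiff hST T.toFinite, hdiff, add_zero] at hT
  exact hT

-- The `p - 1` values of `f` off `a` sum to `0`, as do all residues, so the omitted residue is `0`.
theorem eq_of_finsum_mem_eq_zero_of_injOn {α : Type*} (hp2 : p ≠ 2) {S : Set α} {f : α → ZMod p}
    (hS : S.ncard = p) (hsum : ∑ᶠ s ∈ S, f s = 0) {a b : α} (ha : a ∈ S) (hb : b ∈ S)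
    (hfa : f a = 0) (hfb : f b = 0) (hinj : Set.InjOn f (S \ {a})) : a = b := by
  by_contra hab
  have hcard : (f '' (S \ {a}))ᶜ.ncard = 1 := by
    have := hp.out.one_lt
    rw [Set.ncard_compl, hinj.ncard_image, Set.ncard_sdiff_singleton_of_mem ha, hS, Nat.card_zmod]
    omega
  obtain ⟨c, hc⟩ := Set.ncard_eq_one.1 hcard
  have himage : ∑ᶠ x ∈ f '' (S \ {a}), x = 0 := by
    rw [finsum_mem_image hinj, ← hsum, ← finsum_mem_add_sdiff (Set.singleton_subset_iff.2 ha)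
      (Set.finite_of_ncard_ne_zero (by rw [hS]; exact hp.out.ne_zero)), finsum_mem_singleton, hfa,
      zero_add]
  have hc0 : c = 0 := by
    calc c = ∑ᶠ x ∈ f '' (S \ {a}), x + ∑ᶠ x ∈ Set.univ \ f '' (S \ {a}), x := by
          rw [himage, ← Set.compl_eq_univ_sdiff, hc, finsum_mem_singleton, zero_add]
      _ = ∑ x, x := by
        rw [finsum_mem_add_sdiff (Set.subset_univ _) Set.finite_univ, finsum_mem_univ,
          finsum_eq_sum_of_fintype]
      _ = 0 := sum_zmod_eq_zero hp2
  have hmem : c ∈ (f '' (S \ {a}))ᶜ := by rw [hc]; rfl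
  exact hmem ⟨b, ⟨hb, Ne.symm hab⟩, hfb.trans hc0.symm⟩

theorem mul_self_eq_shift {G : Subgroup (Perm (ZMod p × Bool))} (hG : FreeAtPrime p G)
    (hshift : shift 1 ∈ G) (hswap : swapSides (ZMod p) ∈ G) {t : Perm (ZMod p × Bool)}
    (htG : t ∈ G) (ht : Commute t (shift 1)) :
    ∃ a, t * t = shift (2 * a) ∧ (a = 0 → t = 1 ∨ t = swapSides (ZMod p)) := by
  obtain ⟨a, rfl | rfl⟩ := eq_shift_or_eq_swapSides_mul_shift hG hshift hswap htG ht
  · exact ⟨a, by rw [shift_mul_shift, two_mul], fun ha => .inl (by rw [ha, shift_zero])⟩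
  · refine ⟨a, ?_, fun ha => .inr (by rw [ha, shift_zero, mul_one])⟩
    rw [(commute_swapSides_shift _).symm.mul_mul_mul_comm, swapSides_mul_self, one_mul,
      shift_mul_shift, two_mul]

theorem not_commute_conj_of_not_semiconjBy (hp2 : p ≠ 2) {G : Subgroup (Perm (ZMod p × Bool))}
    (hG : FreeAtPrime p G) (hshift : shift 1 ∈ G) (hswap : swapSides (ZMod p) ∈ G)
    {s t : Perm (ZMod p × Bool)} (hsG : s ∈ G) (htG : t ∈ G)
    (ht : ∀ c, ¬ SemiconjBy t (shift 1) (shift c)) (hs : Commute s (shift 1)) (hs1 : s ≠ 1)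
    (hsw : s ≠ swapSides (ZMod p)) : ¬ Commute (t * s * t⁻¹) (shift 1) := by
  intro hcomm
  obtain ⟨a, ha, ha0⟩ := mul_self_eq_shift hG hshift hswap hsG hs
  obtain ⟨b, hb, -⟩ := mul_self_eq_shift hG hshift hswap
    (G.mul_mem (G.mul_mem htG hsG) (G.inv_mem htG)) hcomm
  have hne : 2 * a ≠ 0 := mul_ne_zero (two_ne_zero_of_prime_ne_two hp2)
    fun h0 => (ha0 h0).elim hs1 hsw
  have hsemi : SemiconjBy t (shift (2 * a)) (shift (2 * b)) := by
    rw [← ha, ← hb]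
    exact (SemiconjBy.conj_mk t s).mul_right (SemiconjBy.conj_mk t s)
  exact ht _ (semiconjBy_shift hne hsemi 1)

theorem exists_commute_conj_eq_of_mem_range {G : Subgroup (Perm (ZMod p × Bool))}
    (hshift : shift 1 ∈ G) {s t t' : Perm (ZMod p × Bool)} (htG : t ∈ G)
    (hwt : Commute (swapSides (ZMod p)) t)
    (hs : t * s * t⁻¹ ∈ Set.range fun a : ZMod p => shift a * t * (shift a)⁻¹)
    (ht' : t' ∈ Set.range fun a : ZMod p => shift a * t * (shift a)⁻¹) :
    ∃ r ∈ G, Commute (swapSides (ZMod p)) r ∧ t' = r * s * r⁻¹ := by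
  obtain ⟨a, ha : shift a * t * (shift a)⁻¹ = t * s * t⁻¹⟩ := hs
  obtain ⟨b, rfl⟩ := ht'
  refine ⟨shift b * (shift a)⁻¹ * t, G.mul_mem (G.mul_mem (shift_mem hshift b)
      (G.inv_mem (shift_mem hshift a))) htG,
    ((commute_swapSides_shift b).mul_right (commute_swapSides_shift a).inv_right).mul_right hwt, ?_⟩
  calc shift b * t * (shift b)⁻¹
    _ = shift b * (shift a)⁻¹ * (shift a * t * (shift a)⁻¹) * shift a * (shift b)⁻¹ := by group
    _ = shift b * (shift a)⁻¹ * (t * s * t⁻¹) * shift a * (shift b)⁻¹ := by rw [ha]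
    _ = _ := by group

theorem ncard_commute_shift {T : Set (Perm (ZMod p × Bool))} (h : IsRCC T)
    (hshift : shift 1 ∈ Subgroup.closure T) {t : Perm (ZMod p × Bool)} (ht : t ∈ T)
    (htg : ¬ Commute t (shift 1)) :
    {t ∈ T | Commute (shift 1) t}.ncard = p ∧ (T \ {t ∈ T | Commute (shift 1) t}).ncard = p := by
  have hsub : {t ∈ T | Commute (shift 1) t} ⊆ T := Set.sep_subset _ _
  have hT : T.ncard = p + p := by
    rw [h.ncard_eq, Nat.card_prod, Nat.card_zmod, Nat.card_eq_fintype_card, Fintype.card_bool,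
      mul_two]
  have hle := h.le_ncard_commute (p := p) ⟨2, by simp⟩ hshift (shift_pow_prime 1)
  have hlt : {t ∈ T | Commute (shift 1) t}.ncard < p + p :=
    hT ▸ Set.ncard_lt_ncard ⟨hsub, fun hT => htg (hT ht).2.symm⟩
  have hdvd : p ∣ {t ∈ T | Commute (shift 1) t}.ncard := by
    have hmod := ncard_modEq_ncard_commute (shift_pow_prime 1) T.toFinite fun t ht =>
      h.conj_mem hshift ht
    rw [hT] at hmod
    exact (Nat.modEq_zero_iff_dvd.1 (hmod.symm.trans (by simp [Nat.ModEq])))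
  have hS : {t ∈ T | Commute (shift 1) t}.ncard = p := by
    obtain ⟨k, hk⟩ := hdvd
    have hk0 : k ≠ 0 := by rintro rfl; have := hp.out.pos; omega
    have hk2 : k < 2 := Nat.lt_of_mul_lt_mul_left (a := p) (by omega)
    rw [hk, show k = 1 by omega, mul_one]
  have := Set.ncard_sdiff_add_ncard_of_subset hsub
  exact ⟨hS, by omega⟩

theorem conj_mem_sdiff_commute {X : Type*} [Finite X] {T : Set (Perm X)} (h : IsRCC T)
    {g u s : Perm X} (huG : u ∈ Subgroup.closure T) (hu : Commute g u)
    (hs : s ∈ T \ {t ∈ T | Commute g t}) : u * s * u⁻¹ ∈ T \ {t ∈ T | Commute g t} := by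
  refine ⟨h.conj_mem huG hs.1, fun hmem => hs.2 ⟨hs.1, ?_⟩⟩
  have hcomm := (hu.inv_right.mul_right hmem.2).mul_right hu
  rwa [show u⁻¹ * (u * s * u⁻¹) * u = s by group] at hcomm

theorem swapSides_mul_shift_pow_prime (hp2 : p ≠ 2) (a : ZMod p) :
    (swapSides (ZMod p) * shift a) ^ p = swapSides (ZMod p) := by
  obtain ⟨k, hk⟩ := hp.out.odd_of_ne_two hp2
  rw [(commute_swapSides_shift a).mul_pow, shift_pow_prime, mul_one, hk, pow_succ, pow_mul, pow_two,
    swapSides_mul_self, one_pow, one_mul]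

theorem swapSides_mul_shift_ne_shift (a b : ZMod p) : swapSides (ZMod p) * shift a ≠ shift b :=
  fun h => by simpa using congrArg Prod.snd (Equiv.congr_fun h (0, false))

theorem swapSides_ne_one : swapSides (ZMod p) ≠ 1 := by
  simpa only [shift_zero, mul_one] using swapSides_mul_shift_ne_shift (p := p) 0 0

theorem exists_eq_shift_of_pow_eq_one (hp2 : p ≠ 2) {s : Perm (ZMod p × Bool)}
    (hs : ∃ a, s = shift a ∨ s = swapSides (ZMod p) * shift a) (hsp : s ^ p = 1) :
    ∃ a, s = shift a := by
  obtain ⟨a, rfl | rfl⟩ := hs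
  · exact ⟨a, rfl⟩
  · exact absurd ((swapSides_mul_shift_pow_prime hp2 a).symm.trans hsp) swapSides_ne_one

theorem exists_eq_swapSides_mul_shift_of_pow_ne_one {s : Perm (ZMod p × Bool)}
    (hs : ∃ a, s = shift a ∨ s = swapSides (ZMod p) * shift a) (hsp : s ^ p ≠ 1) :
    ∃ a, s = swapSides (ZMod p) * shift a := by
  obtain ⟨a, rfl | rfl⟩ := hs
  · exact absurd (shift_pow_prime a) hsp
  · exact ⟨a, rfl⟩

theorem conj_swapSides_mul_shift_apply_ne {G : Subgroup (Perm (ZMod p × Bool))}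
    (hG : FreeAtPrime p G) (hshift : shift 1 ∈ G) {r : Perm (ZMod p × Bool)} (hrG : r ∈ G)
    (hr : Commute (swapSides (ZMod p)) r) {a : ZMod p} (ha : a ≠ 0) (z : ZMod p × Bool) :
    (r * (swapSides (ZMod p) * shift a) * r⁻¹ : Perm _) z ≠ swapSides (ZMod p) z := by
  have hsplit : r * (swapSides (ZMod p) * shift a) * r⁻¹ =
      swapSides (ZMod p) * (r * shift a * r⁻¹) := by
    rw [← mul_assoc, ← hr.eq, mul_assoc, mul_assoc, mul_assoc]
  rw [hsplit, Equiv.Perm.mul_apply, (swapSides (ZMod p)).injective.ne_iff]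
  have hne : (shift a : Perm (ZMod p × Bool)) ≠ 1 := fun h =>
    ha (by simpa using congrArg Prod.fst (Equiv.congr_fun h (0, false)))
  refine hG _ (G.mul_mem (G.mul_mem hrG (shift_mem hshift a)) (G.inv_mem hrG))
    (orderOf_eq_prime ?_ ?_) z
  · rw [conj_pow, shift_pow_prime, mul_one, mul_inv_cancel]
  · rwa [ne_eq, mul_inv_eq_one, mul_eq_left]

theorem swapSides_notMem_of_forall_eq_shift (hp2 : p ≠ 2) {S : Set (Perm (ZMod p × Bool))}
    (hS : S.ncard = p) (hsum : ∑ᶠ s ∈ S, (s (0, false)).1 = 0) (h1 : 1 ∈ S)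
    (hall : ∀ s ∈ S, s ≠ swapSides (ZMod p) → ∃ a, s = shift a) : swapSides (ZMod p) ∉ S := by
  refine fun hw => swapSides_ne_one
    (eq_of_finsum_mem_eq_zero_of_injOn hp2 hS hsum hw h1 rfl rfl ?_)
  rintro s ⟨hs, hsw⟩ s' ⟨hs', hsw'⟩ hss'
  obtain ⟨a, rfl⟩ := hall s hs hsw
  obtain ⟨b, rfl⟩ := hall s' hs' hsw'
  simp only [shift_apply, zero_add] at hss'
  rw [hss']

theorem swapSides_notMem_of_forall_eq_swapSides_mul_shift (hp2 : p ≠ 2)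
    {S : Set (Perm (ZMod p × Bool))} (hS : S.ncard = p)
    (hsum : ∑ᶠ s ∈ S, (s (0, false)).1 = 0) (h1 : 1 ∈ S)
    (hall : ∀ s ∈ S, s ≠ 1 → ∃ a, s = swapSides (ZMod p) * shift a) :
    swapSides (ZMod p) ∉ S := by
  refine fun hw => swapSides_ne_one.symm
    (eq_of_finsum_mem_eq_zero_of_injOn hp2 hS hsum h1 hw rfl rfl ?_)
  rintro s ⟨hs, hs1⟩ s' ⟨hs', hs1'⟩ hss'
  obtain ⟨a, rfl⟩ := hall s hs hs1
  obtain ⟨b, rfl⟩ := hall s' hs' hs1'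
  simp only [Equiv.Perm.mul_apply, shift_apply, zero_add, swapSides_apply] at hss'
  rw [hss']

theorem finsum_mem_eq_zero_and_exists_conj_eq (hp2 : p ≠ 2) {T : Set (Perm (ZMod p × Bool))}
    (h : IsRCC T) (hfree : FreeAtPrime p (Subgroup.closure T))
    (hshift : shift 1 ∈ Subgroup.closure T) (hswap : swapSides (ZMod p) ∈ Subgroup.closure T)
    {j : ZMod p} (hj : swapSides (ZMod p) * shift j ∈ T) {t : Perm (ZMod p × Bool)} (ht : t ∈ T)
    (htc : ∀ c, ¬ SemiconjBy t (shift 1) (shift c)) :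
    ∑ᶠ s ∈ {t ∈ T | Commute (shift 1) t}, (s (0, false)).1 = 0 ∧
      ∀ s ∈ {t ∈ T | Commute (shift 1) t}, s ≠ 1 → s ≠ swapSides (ZMod p) →
        ∀ t' ∈ T \ {t ∈ T | Commute (shift 1) t},
          ∃ r ∈ Subgroup.closure T, Commute (swapSides (ZMod p)) r ∧ t' = r * s * r⁻¹ := by
  have hTG {s : Perm (ZMod p × Bool)} (hs : s ∈ T) := Subgroup.subset_closure hs
  have htS : t ∈ T \ {t ∈ T | Commute (shift 1) t} := ⟨ht, fun hmem => htc 1 hmem.2.symm⟩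
  have hN := eq_range_conj_shift (ncard_commute_shift h hshift ht (htc 1)).2
    (fun a s hs => conj_mem_sdiff_commute h (shift_mem hshift a) (commute_shift_shift 1 a) hs)
    htS (htc 1)
  have hwt : Commute (swapSides (ZMod p)) t := by
    have hmem := conj_mem_sdiff_commute h (hTG hj)
      ((commute_swapSides_shift 1).symm.mul_right (commute_shift_shift 1 j)) htS
    rw [hN] at hmem
    obtain ⟨i, hi⟩ := hmem
    exact commute_swapSides_of_conj_eq hp2 (htc 1) hi.symm
  refine ⟨finsum_mem_eq_zero_of_range_conj_shift hp2 h (Set.sep_subset _ _) (htc 1) hwt hN,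
    fun s hs hs1 hsw t' ht' => ?_⟩
  refine exists_commute_conj_eq_of_mem_range hshift (hTG ht) hwt (hN ▸ ⟨?_, fun hmem => ?_⟩)
    (hN ▸ ht')
  · exact h.conj_mem (hTG ht) hs.1
  · exact not_commute_conj_of_not_semiconjBy hp2 hfree hshift hswap (hTG hs.1) (hTG ht) htc
      hs.2.symm hs1 hsw hmem.2.symm

theorem exists_mem_sdiff_apply_eq_swapSides {T S : Set (Perm (ZMod p × Bool))} (h : IsRCC T)
    (hall : ∀ s ∈ S, s ≠ 1 → ∃ a, s = swapSides (ZMod p) * shift a)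
    (hwS : swapSides (ZMod p) ∉ S) :
    ∃ t ∈ T \ S, t (0, false) = swapSides (ZMod p) (0, false) := by
  obtain ⟨t, ht, htz⟩ := h.exists_apply_eq (0, false) (swapSides (ZMod p) (0, false))
  refine ⟨t, ⟨ht, fun htS => ?_⟩, htz⟩
  obtain ⟨b, rfl⟩ := hall t htS fun h1 => by
    rw [h1] at htz
    simpa using congrArg Prod.snd htz
  have hb : b = 0 := by simpa using htz
  rw [hb, shift_zero, mul_one] at htS
  exact hwS htS

theorem isBlockFor_of_swapSides_mul_shift_mem (hp2 : p ≠ 2) {T : Set (Perm (ZMod p × Bool))}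
    (h : IsRCC T) (hfree : FreeAtPrime p (Subgroup.closure T))
    (hshift : shift 1 ∈ Subgroup.closure T) (hswap : swapSides (ZMod p) ∈ Subgroup.closure T)
    {j : ZMod p} (hj : swapSides (ZMod p) * shift j ∈ T) : IsBlockFor T {z | z.2 = false} := by
  by_contra hno
  obtain ⟨t, ht, htc⟩ : ∃ t ∈ T, ∀ c, ¬ SemiconjBy t (shift 1) (shift c) := by
    by_contra! hall
    exact hno (isBlockFor_of_semiconjBy_shift hall false)
  have hS := (ncard_commute_shift h hshift ht (htc 1)).1
  obtain ⟨hsum, hconj⟩ := finsum_mem_eq_zero_and_exists_conj_eq hp2 h hfree hshift hswap hj ht htc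
  set S := {t ∈ T | Commute (shift 1) t}
  have h1S : 1 ∈ S := ⟨h.one_mem, Commute.one_right _⟩
  have hform (s) (hs : s ∈ S) := eq_shift_or_eq_swapSides_mul_shift hfree hshift hswap
    (Subgroup.subset_closure hs.1) hs.2.symm
  have hpow (s) (hs : s ∈ S) (hs1 : s ≠ 1) (hsw : s ≠ swapSides (ZMod p)) :
      t ^ p = 1 ↔ s ^ p = 1 := by
    obtain ⟨r, -, -, rfl⟩ := hconj s hs hs1 hsw t ⟨ht, fun hmem => htc 1 hmem.2.symm⟩
    rw [conj_pow, mul_inv_eq_one, mul_eq_left]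
  -- The members of `S` other than `1` and `swapSides` are conjugate to `t`, so `t ^ p` decides
  -- whether they are all shifts or all of the form `swapSides * shift a`; neither can happen.
  by_cases htp : t ^ p = 1
  · have hshifts (s) (hs : s ∈ S) (hsw : s ≠ swapSides (ZMod p)) : ∃ a, s = shift a := by
      obtain rfl | hs1 := eq_or_ne s 1
      · exact ⟨0, shift_zero.symm⟩
      · exact exists_eq_shift_of_pow_eq_one hp2 (hform s hs) ((hpow s hs hs1 hsw).1 htp)
    have hjS : swapSides (ZMod p) * shift j ∈ S :=
      ⟨hj, (commute_swapSides_shift 1).symm.mul_right (commute_shift_shift 1 j)⟩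
    refine swapSides_notMem_of_forall_eq_shift hp2 hS hsum h1S hshifts (by_contra fun hwS => ?_)
    obtain ⟨a, ha⟩ := hshifts _ hjS fun hw => hwS (hw ▸ hjS)
    exact swapSides_mul_shift_ne_shift j a ha
  · have hswaps (s) (hs : s ∈ S) (hs1 : s ≠ 1) : ∃ a, s = swapSides (ZMod p) * shift a := by
      obtain rfl | hsw := eq_or_ne s (swapSides (ZMod p))
      · exact ⟨0, by rw [shift_zero, mul_one]⟩
      · exact exists_eq_swapSides_mul_shift_of_pow_ne_one (hform s hs)
          (mt (hpow s hs hs1 hsw).2 htp)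
    have hwS := swapSides_notMem_of_forall_eq_swapSides_mul_shift hp2 hS hsum h1S hswaps
    obtain ⟨s, hs, hs1⟩ := Set.exists_ne_of_one_lt_ncard (hS ▸ hp.out.one_lt) 1
    obtain ⟨a, rfl⟩ := hswaps s hs hs1
    have hsw : swapSides (ZMod p) * shift a ≠ swapSides (ZMod p) := fun hw => hwS (hw ▸ hs)
    have ha : a ≠ 0 := fun ha => hsw (by rw [ha, shift_zero, mul_one])
    obtain ⟨t', ht', hzt'⟩ := exists_mem_sdiff_apply_eq_swapSides h hswaps hwS
    obtain ⟨r, hrG, hr, rfl⟩ := hconj _ hs hs1 hsw t' ht'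
    exact conj_swapSides_mul_shift_apply_ne hfree hshift hrG hr ha _ hzt'

end FreeShift

theorem FreeAtPrime.closure_image {X Y : Type*} {p : ℕ} {T : Set (Perm X)}
    (hT : FreeAtPrime p (Subgroup.closure T)) (e : X ≃ Y) :
    FreeAtPrime p (Subgroup.closure (e.permCongr '' T)) := by
  intro g hg hgo y hy
  obtain ⟨g, rfl⟩ := e.permCongr.surjective g
  refine hT g ((permCongr_mem_closure_image e).1 hg) ?_ (e.symm y) ?_
  · rw [← hgo]
    exact (e.permCongrHom.orderOf_eq g).symm
  · exact e.injective (Eq.trans hy (e.apply_symm_apply y).symm)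

theorem exists_ncard_isBlockFor_of_image {X Y : Type*} {n : ℕ} {T : Set (Perm X)} (e : X ≃ Y)
    (hO : ∃ O, O.ncard = n ∧ IsBlockFor (e.permCongr '' T) O) :
    ∃ O, O.ncard = n ∧ IsBlockFor T O := by
  obtain ⟨O, hO, hblock⟩ := hO
  refine ⟨e ⁻¹' O, ?_, hblock.preimage⟩
  rw [Set.ncard_preimage_of_injective_subset_range e.injective (by simp), hO]

section BlockExists

variable {p : ℕ} [hp : Fact p.Prime]

theorem exists_conj_eq_swapSides_mul_shift (hp2 : p ≠ 2) {u : Perm (ZMod p × Bool)}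
    (hu : Commute u (shift 1)) (hside : (u (0, false)).2 = true) :
    ∃ e : Perm (ZMod p × Bool), Commute e (shift 1) ∧
      ∃ j, e * u * e⁻¹ = swapSides (ZMod p) * shift j := by
  obtain ⟨d, hd⟩ : ∃ d, u (0, false) = (d, true) := ⟨_, Prod.ext rfl hside⟩
  obtain ⟨d', hd'⟩ : ∃ d', u (0, true) = (d', false) :=
    ⟨_, Prod.ext rfl (by rw [snd_apply_true_of_commute hu, hside]; rfl)⟩
  have h2 := two_ne_zero_of_prime_ne_two hp2
  let e : Perm (ZMod p × Bool) :=
    Equiv.prodCongrLeft fun i => Equiv.addRight (if i then (d' - d) / 2 else 0)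
  have he (x : ZMod p) (i : Bool) : e (x, i) = (x + if i then (d' - d) / 2 else 0, i) := rfl
  refine ⟨e, Equiv.ext fun ⟨x, i⟩ => ?_, (d + d') / 2,
    mul_inv_eq_iff_eq_mul.2 (Equiv.ext fun ⟨x, i⟩ => ?_)⟩
  · exact Prod.ext (add_right_comm _ _ _) rfl
  · rw [Equiv.Perm.mul_apply, apply_eq_shift_of_semiconjBy hu]
    cases i <;> simp [hd, hd', he] <;> field_simp <;> ring

theorem exists_isBlockFor_of_side_true (hp2 : p ≠ 2) {T : Set (Perm (ZMod p × Bool))}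
    (h : IsRCC T) (hfree : FreeAtPrime p (Subgroup.closure T))
    (hshift : shift 1 ∈ Subgroup.closure T) {u : Perm (ZMod p × Bool)} (huT : u ∈ T)
    (hu : Commute u (shift 1)) (hside : (u (0, false)).2 = true) :
    ∃ O, O.ncard = p ∧ IsBlockFor T O := by
  obtain ⟨e, he, j, hj⟩ := exists_conj_eq_swapSides_mul_shift hp2 hu hside
  have hshift' : shift 1 ∈ Subgroup.closure (e.permCongr '' T) := by
    have hmem := (permCongr_mem_closure_image e).2 hshift
    rwa [show e.permCongr (shift 1) = shift 1 from mul_inv_eq_iff_eq_mul.2 he.eq] at hmem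
  have hjT : swapSides (ZMod p) * shift j ∈ e.permCongr '' T := ⟨u, huT, hj⟩
  have hswap : swapSides (ZMod p) ∈ Subgroup.closure (e.permCongr '' T) :=
    (Subgroup.mul_mem_cancel_right _ (shift_mem hshift' j)).1 (Subgroup.subset_closure hjT)
  exact exists_ncard_isBlockFor_of_image e ⟨_, ncard_snd_eq_false,
    isBlockFor_of_swapSides_mul_shift_mem hp2 (h.image e) (hfree.closure_image e) hshift' hswap hjT⟩

theorem IsRCC.exists_isBlockFor_of_apply_apply_eq {X : Type*} [Finite X] {T : Set (Perm X)}
    (h : IsRCC T) {u : Perm X} (hu : u ∈ T) {y : X} (huy : u y ≠ y) (huuy : u (u y) = y) :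
    ∃ O, O.ncard = 2 ∧ IsBlockFor T O := by
  refine ⟨{y, u y}, Set.ncard_pair huy.symm, h.isBlockFor_of_ncard_le ?_⟩
  have hne : (1 : Perm X) ≠ u := by rintro rfl; exact huy rfl
  rw [Set.ncard_pair huy.symm, ← Set.ncard_pair hne]
  refine Set.ncard_le_ncard ?_
  rintro t (rfl | rfl)
  · exact ⟨h.one_mem, fun x hx => hx⟩
  · refine ⟨hu, ?_⟩
    rintro x (rfl | rfl)
    · exact .inr rfl
    · exact .inl huuy

theorem commute_of_mul_self_eq_shift_one {u t : Perm (ZMod 2 × Bool)} (hu : u * u = shift 1)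
    {i : ZMod 2} (hi : shift i * t * (shift i)⁻¹ = u * t * u⁻¹) : Commute u t := by
  obtain rfl | rfl := (by decide : ∀ c : ZMod 2, c = 0 ∨ c = 1) i
  · rw [shift_zero, one_mul, inv_one, mul_one] at hi
    exact mul_inv_eq_iff_eq_mul.1 hi.symm
  · refine mul_inv_eq_iff_eq_mul.1 (mul_left_cancel (a := u) (mul_right_cancel (b := u⁻¹) ?_))
    calc u * (u * t * u⁻¹) * u⁻¹ = u * u * t * (u * u)⁻¹ := by group
      _ = u * t * u⁻¹ := by rw [hu, hi]

theorem exists_isBlockFor_of_side_true_two {T : Set (Perm (ZMod 2 × Bool))} (h : IsRCC T)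
    (hshift : shift 1 ∈ Subgroup.closure T) {u : Perm (ZMod 2 × Bool)} (huT : u ∈ T)
    (hu : Commute u (shift 1)) (hside : (u (0, false)).2 = true) :
    ∃ O, O.ncard = 2 ∧ IsBlockFor T O := by
  by_contra hno
  have huu : u * u = shift 1 := by
    obtain ⟨d, hd⟩ : ∃ d, u (0, false) = (d, true) := ⟨_, Prod.ext rfl hside⟩
    obtain ⟨d', hd'⟩ : ∃ d', u (0, true) = (d', false) :=
      ⟨_, Prod.ext rfl (by rw [snd_apply_true_of_commute hu, hside]; rfl)⟩
    have hu_apply (x : ZMod 2) (i : Bool) : u (x, i) = (x + if i then d' else d, !i) := by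
      rw [apply_eq_shift_of_semiconjBy hu]
      cases i <;> simp [hd, hd', add_comm]
    have hdd : d + d' = 1 := by
      by_contra hne
      have h0 := ((by decide : ∀ c : ZMod 2, c = 0 ∨ c = 1) (d + d')).resolve_right hne
      refine hno (h.exists_isBlockFor_of_apply_apply_eq huT (y := (0, false)) ?_ ?_)
      · simp [hd]
      · simp [hu_apply, h0]
    refine Equiv.ext fun ⟨x, i⟩ => ?_
    cases i <;> simp [hu_apply, add_assoc, hdd, add_comm d']
  obtain ⟨t, ht, htg⟩ : ∃ t ∈ T, ¬ Commute t (shift 1) := by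
    by_contra! hall
    exact hno ⟨_, ncard_snd_eq_false,
      isBlockFor_of_semiconjBy_shift (fun t ht => ⟨1, hall t ht⟩) false⟩
  have htS : t ∈ T \ {t ∈ T | Commute (shift 1) t} := ⟨ht, fun hmem => htg hmem.2.symm⟩
  have hN := eq_range_conj_shift (ncard_commute_shift h hshift ht htg).2
    (fun a s hs => conj_mem_sdiff_commute h (shift_mem hshift a) (commute_shift_shift 1 a) hs)
    htS htg
  have hmem := conj_mem_sdiff_commute h (Subgroup.subset_closure huT) hu.symm htS
  rw [hN] at hmem
  obtain ⟨i, hi⟩ := hmem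
  have hut := commute_of_mul_self_eq_shift_one huu hi
  exact htg (huu ▸ (hut.mul_left hut).symm)

theorem IsRCC.exists_isBlockFor_of_freeAtPrime {X : Type*} {T : Set (Perm X)}
    (h : IsRCC T) (hX : Nat.card X = 2 * p) (hfree : FreeAtPrime p (Subgroup.closure T)) :
    ∃ O, O.ncard = p ∧ IsBlockFor T O := by
  obtain ⟨_, _⟩ := Nat.card_pos_iff.1 (hX ▸ mul_pos two_pos hp.out.pos)
  obtain ⟨g, hg, hgo⟩ := h.exists_prime_order (p := p) (hX ▸ dvd_mul_left p 2)
  obtain ⟨E, hE⟩ := exists_zmod_prod_equiv (ι := Bool) (hgo ▸ pow_orderOf_eq_one g)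
    (hfree g hg hgo) (by simp [hX, mul_comm])
  have hshift : shift 1 ∈ Subgroup.closure (E.symm.permCongr '' T) := by
    have hmem := (permCongr_mem_closure_image E.symm).2 hg
    rwa [show E.symm.permCongr g = shift 1 from Equiv.ext fun z => by
      rw [Equiv.permCongr_apply, Equiv.symm_symm, ← hE, Equiv.symm_apply_apply]; rfl] at hmem
  have hT := h.image E.symm
  refine exists_ncard_isBlockFor_of_image E.symm ?_
  by_cases hside : ∀ t ∈ E.symm.permCongr '' T, Commute t (shift 1) → (t (0, false)).2 = false
  · exact ⟨_, ncard_snd_eq_false, isBlockFor_of_commute_imp hT hshift hside⟩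
  push Not at hside
  obtain ⟨u, huT, hu, hu0⟩ := hside
  have hu0 := Bool.eq_true_of_not_eq_false hu0
  obtain rfl | hp2 := eq_or_ne p 2
  · exact exists_isBlockFor_of_side_true_two hT hshift huT hu hu0
  · exact exists_isBlockFor_of_side_true hp2 hT (hfree.closure_image _) hshift huT hu hu0

end BlockExists

theorem IsRCC.exists_isBlockFor {X : Type*} {p : ℕ} [hp : Fact p.Prime] {T : Set (Perm X)}
    (h : IsRCC T) (hX : Nat.card X = 2 * p) : ∃ O, O.ncard = p ∧ IsBlockFor T O := by
  by_cases hfree : FreeAtPrime p (Subgroup.closure T)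
  · exact h.exists_isBlockFor_of_freeAtPrime hX hfree
  · simp only [FreeAtPrime, not_forall, not_not] at hfree
    obtain ⟨g, hg, hgo, x, hx⟩ := hfree
    exact h.exists_isBlockFor_of_fixed hX hg hgo hx

section Coordinates

variable {X : Type*} {p : ℕ} {T : Set (Perm X)} {O : Set X}

theorem IsBlockFor.preimage_eq [Finite X] (hO : IsBlockFor T O) (hcard : O.ncard = Oᶜ.ncard)
    {t : Perm X} (ht : t ∈ T) : t ⁻¹' O = O ∨ t ⁻¹' O = Oᶜ := by
  have image_eq {B : Set X} (hmaps : MapsTo t O B) (hB : O.ncard = B.ncard) : t '' O = B :=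
    Set.eq_of_subset_of_ncard_le hmaps.image_subset
      (by rw [Set.ncard_image_of_injective _ t.injective, hB])
  refine (hO t ht).imp (fun hmaps => ?_) (fun hmaps => compl_injective ?_)
  · conv_lhs => rw [← image_eq hmaps rfl]
    exact Set.preimage_image_eq O t.injective
  · rw [← Set.preimage_compl, compl_compl, ← image_eq hmaps hcard,
      Set.preimage_image_eq O t.injective]

theorem IsRCC.restrict (h : IsRCC T) (hT : ∀ t ∈ T, t ⁻¹' O = O ∨ t ⁻¹' O = Oᶜ) :
    IsRCC {u : Perm O | ∃ t ∈ T, ∀ x : O, t x = u x} where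
  one_mem := ⟨1, h.one_mem, fun _ => rfl⟩
  existsUnique_apply x y := by
    obtain ⟨t, ht, hxy⟩ := h.exists_apply_eq (x : X) y
    have hx : (x : X) ∈ t ⁻¹' O := by simp [hxy]
    have htO : t ⁻¹' O = O := (hT t ht).resolve_right fun e => (e ▸ hx : (x : X) ∈ Oᶜ) x.2
    refine ⟨t.subtypePerm fun z => Set.ext_iff.1 htO z,
      ⟨⟨t, ht, fun _ => rfl⟩, Subtype.ext hxy⟩, ?_⟩
    rintro u ⟨⟨s, hs, hsu⟩, huxy⟩
    obtain rfl := h.eq_of_apply_eq hs ht (x := x) (by rw [hsu, huxy, hxy])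
    exact Equiv.ext fun z => Subtype.ext (hsu z).symm
  inv_mul_mul_mem := by
    rintro s ⟨s', hs', hs⟩ t ⟨t', ht', ht⟩
    refine ⟨t'⁻¹ * s' * t', h.inv_mul_mul_mem _ hs' _ ht', fun x => ?_⟩
    simp only [Equiv.Perm.mul_apply, ht, hs]
    rw [Equiv.Perm.inv_eq_iff_eq, ht]
    exact congrArg Subtype.val (t.apply_symm_apply _).symm

theorem IsRCC.exists_equiv_zmod_of_preimage_eq [Fact p.Prime] (h : IsRCC T)
    (hT : ∀ t ∈ T, t ⁻¹' O = O ∨ t ⁻¹' O = Oᶜ) (hO : O.ncard = p) :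
    ∃ e : ZMod p ≃ O, ∀ t ∈ T, t ⁻¹' O = O → ∃ a, ∀ x, t (e x) = e (x + a) := by
  obtain ⟨e, he⟩ := (h.restrict hT).exists_equiv_zmod hO
  refine ⟨e, fun t ht htO => ?_⟩
  obtain ⟨a, ha⟩ := he (t.subtypePerm fun z => Set.ext_iff.1 htO z) ⟨t, ht, fun _ => rfl⟩
  exact ⟨a, fun x => congrArg Subtype.val (ha x)⟩

/-- The permutation of two copies of `ZMod p` translating the first copy by `a` and the second one
by `a'`. -/
def translation (a a' : ZMod p) : Perm (ZMod p × Bool) :=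
  Equiv.prodCongrLeft fun i => Equiv.addRight (bif i then a' else a)

@[simp]
theorem translation_false (a a' x : ZMod p) : translation a a' (x, false) = (x + a, false) := rfl

@[simp]
theorem translation_true (a a' x : ZMod p) : translation a a' (x, true) = (x + a', true) := rfl

theorem IsRCC.exists_equiv_translation_or_swap [hp : Fact p.Prime] (h : IsRCC T)
    (hX : Nat.card X = 2 * p) :
    ∃ e : X ≃ ZMod p × Bool, ∀ t ∈ e.permCongr '' T,
      (∃ a a', t = translation a a') ∨ ∀ z, (t z).2 = !z.2 := by
  obtain ⟨_, _⟩ := Nat.card_pos_iff.1 (hX ▸ mul_pos two_pos hp.out.pos)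
  obtain ⟨O, hO, hblock⟩ := h.exists_isBlockFor hX
  have hOc : Oᶜ.ncard = p := by have := Set.ncard_add_ncard_compl O; omega
  have hT (t) (ht : t ∈ T) := hblock.preimage_eq (hO.trans hOc.symm) ht
  obtain ⟨e₀, he₀⟩ := h.exists_equiv_zmod_of_preimage_eq hT hO
  obtain ⟨e₁, he₁⟩ := h.exists_equiv_zmod_of_preimage_eq
    (fun t ht => (hT t ht).imp (congrArg compl) (congrArg compl)) hOc
  classical
  let E : ZMod p × Bool ≃ X := (Equiv.prodComm _ _).trans <| (Equiv.boolProdEquivSum _).trans <|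
    (Equiv.sumCongr e₀ e₁).trans (Equiv.Set.sumCompl O)
  have hE (z) : E z ∈ O ↔ z.2 = false := by
    obtain ⟨x, _ | _⟩ := z
    · exact iff_of_true (e₀ x).2 rfl
    · exact iff_of_false (e₁ x).2 (by simp)
  refine ⟨E.symm, ?_⟩
  rintro _ ⟨t, ht, rfl⟩
  refine (hT t ht).imp (fun htO => ?_) (fun htO z => ?_)
  · obtain ⟨a, ha⟩ := he₀ t ht htO
    obtain ⟨a', ha'⟩ := he₁ t ht (congrArg compl htO)
    refine ⟨a, a', Equiv.ext ?_⟩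
    rintro ⟨x, _ | _⟩
    · exact E.symm_apply_eq.2 (ha x)
    · exact E.symm_apply_eq.2 (ha' x)
  · have hiff : (E.symm (t (E z))).2 = false ↔ ¬ z.2 = false := by
      rw [← hE, ← hE, Equiv.apply_symm_apply]
      exact Set.ext_iff.1 htO (E z)
    rw [Equiv.permCongr_apply, Equiv.symm_symm]
    cases hz : z.2 <;> simpa [hz] using hiff

end Coordinates

section Crossings

variable {p : ℕ} {t s : Perm (ZMod p × Bool)} {a a' m b n c b' c' : ZMod p}

theorem translation_inj : translation a a' = translation b b' ↔ a = b ∧ a' = b' := by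
  refine ⟨fun h => ?_, fun ⟨h, h'⟩ => by rw [h, h']⟩
  have h₀ : (0 + a, false) = (0 + b, false) := DFunLike.congr_fun h (0, false)
  have h₁ : (0 + a', true) = (0 + b', true) := DFunLike.congr_fun h (0, true)
  simp_all

theorem translation_zero : translation (0 : ZMod p) 0 = 1 := by
  ext1 ⟨x, _ | _⟩ <;> simp

theorem translation_mul_translation (a a' b b' : ZMod p) :
    translation a a' * translation b b' = translation (a + b) (a' + b') := by
  ext1 ⟨x, _ | _⟩ <;> simp <;> ring

/-- `t` exchanges the two copies of `ZMod p`, acting on them by the affine maps `x ↦ m * x + b`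
and `x ↦ n * x + c`. -/
def IsCrossing (t : Perm (ZMod p × Bool)) (m b n c : ZMod p) : Prop :=
  ∀ x, t (x, false) = (m * x + b, true) ∧ t (x, true) = (n * x + c, false)

namespace IsCrossing

theorem ext (ht : IsCrossing t m b n c) (hs : IsCrossing s m b n c) : t = s := by
  ext1 ⟨x, _ | _⟩
  · rw [(ht x).1, (hs x).1]
  · rw [(ht x).2, (hs x).2]

theorem eq_params {m' n' : ZMod p} (ht : IsCrossing t m b n c) (ht' : IsCrossing t m' b' n' c') :
    m = m' ∧ b = b' ∧ n = n' ∧ c = c' := by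
  have h₀ := (ht 0).1.symm.trans (ht' 0).1
  have h₁ := (ht 1).1.symm.trans (ht' 1).1
  have k₀ := (ht 0).2.symm.trans (ht' 0).2
  have k₁ := (ht 1).2.symm.trans (ht' 1).2
  simp_all

theorem ne_zero [Fact p.Prime] (ht : IsCrossing t m b n c) : m ≠ 0 ∧ n ≠ 0 := by
  refine ⟨?_, ?_⟩ <;> rintro rfl
  · simpa using t.injective ((ht 0).1.trans (by rw [(ht 1).1]; simp) : t (0, false) = t (1, false))
  · simpa using t.injective ((ht 0).2.trans (by rw [(ht 1).2]; simp) : t (0, true) = t (1, true))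

theorem ne_translation (ht : IsCrossing t m b n c) : t ≠ translation a a' := by
  rintro rfl
  simpa using (ht 0).1

theorem conj_translation (ht : IsCrossing t m b n c) (a a' : ZMod p) :
    t * translation a a' * t⁻¹ = translation (n * a') (m * a) := by
  rw [mul_inv_eq_iff_eq_mul]
  ext1 ⟨x, _ | _⟩ <;> simp [(ht _).1, (ht _).2] <;> ring

theorem translation_conj (ht : IsCrossing t m b n c) (a a' : ZMod p) :
    IsCrossing (translation a a' * t * (translation a a')⁻¹)
      m (b + a' - m * a) n (c + a - n * a') := by
  have hinv : (translation a a')⁻¹ = translation (-a) (-a') := inv_eq_of_mul_eq_one_right <| by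
    rw [translation_mul_translation, add_neg_cancel, add_neg_cancel, translation_zero]
  intro x
  rw [hinv]
  constructor <;> simp [(ht _).1, (ht _).2] <;> ring

theorem conj [Fact p.Prime] (ht : IsCrossing t m b n c) (hs : IsCrossing s m b' n c') :
    IsCrossing (t * s * t⁻¹) m (m * (c' - c) + b) n (n * (b' - b) + c) := by
  obtain ⟨hm, hn⟩ := ht.ne_zero
  have inv_true (x) : t⁻¹ (x, true) = ((x - b) / m, false) := by
    rw [Equiv.Perm.inv_eq_iff_eq, (ht _).1, mul_div_cancel₀ _ hm, sub_add_cancel]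
  have inv_false (x) : t⁻¹ (x, false) = ((x - c) / n, true) := by
    rw [Equiv.Perm.inv_eq_iff_eq, (ht _).2, mul_div_cancel₀ _ hn, sub_add_cancel]
  intro x
  simp only [Equiv.Perm.mul_apply, inv_true, inv_false, (ht _).1, (ht _).2, (hs _).1, (hs _).2]
  constructor <;> congr 1 <;> field_simp <;> ring

end IsCrossing

theorem exists_isCrossing [Fact p.Prime] (hm : m ≠ 0) (hn : n ≠ 0) (b c : ZMod p) :
    ∃ t, IsCrossing t m b n c := by
  refine ⟨(Equiv.prodCongrLeft fun i => bif i then (Equiv.mulLeft₀ n hn).trans (Equiv.addRight c)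
    else (Equiv.mulLeft₀ m hm).trans (Equiv.addRight b)).trans
      ((Equiv.refl _).prodCongr Equiv.boolNot), fun x => ⟨rfl, rfl⟩⟩

theorem eq_mul_add_of_apply_add [Fact p.Prime] {u : ZMod p → ZMod p} {d e : ZMod p} (hd : d ≠ 0)
    (hu : ∀ x, u (x + d) = u x + e) (x : ZMod p) : u x = e / d * x + u 0 := by
  refine zmod_induction_add hd (P := fun x => u x = e / d * x + u 0) (fun x hx => ?_) (b := 0)
    (by simp) x
  rw [hu, hx, mul_add, div_mul_cancel₀ _ hd]
  ring

theorem exists_isCrossing_of_conj_translation [Fact p.Prime] (ht : ∀ z, (t z).2 = !z.2)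
    {f : ZMod p → ZMod p} (hf : Function.Surjective f)
    (hconj : ∀ a, ∃ b b', t * translation a (f a) * t⁻¹ = translation b b') :
    ∃ m b n c, IsCrossing t m b n c := by
  let u : ZMod p → ZMod p := fun x => (t (x, false)).1
  let v : ZMod p → ZMod p := fun x => (t (x, true)).1
  have hu (x) : t (x, false) = (u x, true) := Prod.ext rfl (ht _)
  have hv (x) : t (x, true) = (v x, false) := Prod.ext rfl (ht _)
  have shift_eq (a) : ∃ b b', ∀ x, u (x + a) = u x + b' ∧ v (x + f a) = v x + b := by
    obtain ⟨b, b', h⟩ := hconj a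
    have h := mul_inv_eq_iff_eq_mul.1 h
    refine ⟨b, b', fun x => ⟨?_, ?_⟩⟩
    · simpa [hu] using DFunLike.congr_fun h (x, false)
    · simpa [hv] using DFunLike.congr_fun h (x, true)
  obtain ⟨_, m, hm⟩ := shift_eq 1
  obtain ⟨a, ha⟩ := hf 1
  obtain ⟨n, _, hn⟩ := shift_eq a
  rw [ha] at hn
  refine ⟨m, u 0, n, v 0, fun x => ⟨?_, ?_⟩⟩
  · rw [hu, eq_mul_add_of_apply_add one_ne_zero (fun x => (hm x).1), div_one]
  · rw [hv, eq_mul_add_of_apply_add one_ne_zero (fun x => (hn x).2), div_one]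

end Crossings

section Parameters

variable {p : ℕ} {T : Set (Perm (ZMod p × Bool))} {f M N c : ZMod p → ZMod p}

/-- The functions `f`, `M`, `N` and `c` are parameters of the RCC loop `T` on two copies of
`ZMod p`: its members are the translations by `(a, f a)` and the crossings `x ↦ M b * x + b`,
`x ↦ N b * x + c b`. -/
structure HasParameters (T : Set (Perm (ZMod p × Bool))) (f M N c : ZMod p → ZMod p) : Prop where
  translation_mem : ∀ a, translation a (f a) ∈ T
  exists_isCrossing : ∀ b, ∃ t ∈ T, IsCrossing t (M b) b (N b) (c b)

theorem IsRCC.translation_eq_iff (h : IsRCC T) {a a' b b' : ZMod p} (ha : translation a a' ∈ T)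
    (hb : translation b b' ∈ T) : a = b ↔ a' = b' := by
  refine ⟨fun hab => ?_, fun hab => ?_⟩
  · exact (translation_inj.1 (h.eq_of_apply_eq ha hb (x := (0, false)) (by simp [hab]))).2
  · exact (translation_inj.1 (h.eq_of_apply_eq ha hb (x := (0, true)) (by simp [hab]))).1

namespace HasParameters

theorem eq_translation_or_isCrossing (hP : HasParameters T f M N c) (h : IsRCC T)
    {t : Perm (ZMod p × Bool)} (ht : t ∈ T) :
    (∃ a, t = translation a (f a)) ∨ ∃ b, IsCrossing t (M b) b (N b) (c b) := by
  obtain ⟨y, i, hy⟩ : ∃ y i, t (0, false) = (y, i) := ⟨_, _, rfl⟩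
  cases i
  · exact .inl ⟨y, h.eq_of_apply_eq ht (hP.translation_mem y) (x := (0, false)) (by simp [hy])⟩
  · obtain ⟨s, hs, hcross⟩ := hP.exists_isCrossing y
    obtain rfl := h.eq_of_apply_eq ht hs (x := (0, false)) (by simp [hy, (hcross 0).1])
    exact .inr ⟨y, hcross⟩

theorem eq_of_translation_mem (hP : HasParameters T f M N c) (h : IsRCC T) {a a' : ZMod p}
    (ht : translation a a' ∈ T) : a' = f a :=
  (h.translation_eq_iff ht (hP.translation_mem a)).1 rfl

theorem eq_of_isCrossing (hP : HasParameters T f M N c) (h : IsRCC T)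
    {t : Perm (ZMod p × Bool)} (ht : t ∈ T) {m b n d : ZMod p} (hcross : IsCrossing t m b n d) :
    m = M b ∧ n = N b ∧ d = c b := by
  obtain ⟨a, ha⟩ | ⟨b', hb'⟩ := hP.eq_translation_or_isCrossing h ht
  · exact absurd ha hcross.ne_translation
  · obtain ⟨hm, rfl, hn, hd⟩ := hcross.eq_params hb'
    exact ⟨hm, hn, hd⟩

theorem map_zero (hP : HasParameters T f M N c) (h : IsRCC T) : f 0 = 0 :=
  (hP.eq_of_translation_mem h (translation_zero ▸ h.one_mem)).symm

theorem injective_translation (hP : HasParameters T f M N c) (h : IsRCC T) :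
    Function.Injective f := by
  intro a b hab
  exact (h.translation_eq_iff (hP.translation_mem a) (hP.translation_mem b)).2 hab

theorem injective_crossing (hP : HasParameters T f M N c) (h : IsRCC T) :
    Function.Injective c := by
  intro b b' hbb'
  obtain ⟨t, ht, hcross⟩ := hP.exists_isCrossing b
  obtain ⟨t', ht', hcross'⟩ := hP.exists_isCrossing b'
  obtain rfl := h.eq_of_apply_eq ht ht' (x := (0, true))
    (by rw [(hcross 0).2, (hcross' 0).2, hbb']; simp)
  exact (hcross.eq_params hcross').2.1

variable [Fact p.Prime]

theorem ne_zero (hP : HasParameters T f M N c) (b : ZMod p) : M b ≠ 0 ∧ N b ≠ 0 :=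
  have ⟨_, _, ht⟩ := hP.exists_isCrossing b
  ht.ne_zero

theorem map_mul_map (hP : HasParameters T f M N c) (h : IsRCC T) (a b : ZMod p) :
    f (N b * f a) = M b * a := by
  obtain ⟨t, ht, hcross⟩ := hP.exists_isCrossing b
  have hmem := h.conj_mem (Subgroup.subset_closure ht) (hP.translation_mem a)
  rw [hcross.conj_translation] at hmem
  exact (hP.eq_of_translation_mem h hmem).symm

theorem shift_eq (hP : HasParameters T f M N c) (h : IsRCC T) (a b : ZMod p) :
    M (b + (f a - M b * a)) = M b ∧ N (b + (f a - M b * a)) = N b ∧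
      c (b + (f a - M b * a)) = c b + (a - N b * f a) := by
  obtain ⟨t, ht, hcross⟩ := hP.exists_isCrossing b
  have hmem := h.conj_mem (Subgroup.subset_closure (hP.translation_mem a)) ht
  have ⟨hM, hN, hc⟩ := hP.eq_of_isCrossing h hmem (hcross.translation_conj a (f a))
  rw [← add_sub_assoc, ← add_sub_assoc]
  exact ⟨hM.symm, hN.symm, hc.symm⟩

theorem map_conj_crossing {m n : ZMod p} (hP : HasParameters T f (fun _ => m) (fun _ => n) c)
    (h : IsRCC T) (b d : ZMod p) : c (m * (c d - c b) + b) = n * (d - b) + c b := by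
  obtain ⟨t, ht, hcross⟩ := hP.exists_isCrossing b
  obtain ⟨s, hs, hcross'⟩ := hP.exists_isCrossing d
  have hmem := h.conj_mem (Subgroup.subset_closure ht) hs
  exact (hP.eq_of_isCrossing h hmem (hcross.conj hcross')).2.2.symm

end HasParameters

theorem IsRCC.exists_hasParameters [Fact p.Prime] (h : IsRCC T)
    (hT : ∀ t ∈ T, (∃ a a', t = translation a a') ∨ ∀ z, (t z).2 = !z.2) :
    ∃ f M N c, HasParameters T f M N c := by
  have exists_translation (a) : ∃ a', translation a a' ∈ T := by
    obtain ⟨t, ht, hta⟩ := h.exists_apply_eq ((0 : ZMod p), false) (a, false)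
    obtain ⟨b, b', rfl⟩ | hswap := hT t ht
    · obtain rfl : b = a := by simpa using hta
      exact ⟨b', ht⟩
    · simpa [hta] using hswap (0, false)
  choose f hf using exists_translation
  have hfinj : Function.Injective f := fun a b hab => (h.translation_eq_iff (hf a) (hf b)).2 hab
  have exists_crossing (b) : ∃ m n c, ∃ t ∈ T, IsCrossing t m b n c := by
    obtain ⟨t, ht, htb⟩ := h.exists_apply_eq ((0 : ZMod p), false) (b, true)
    obtain ⟨a, a', rfl⟩ | hswap := hT t ht
    · simp at htb
    obtain ⟨m, b', n, c, hcross⟩ := exists_isCrossing_of_conj_translation hswap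
      (Finite.surjective_of_injective hfinj) fun a =>
        (hT _ (h.conj_mem (Subgroup.subset_closure ht) (hf a))).resolve_right fun hnot => by
          simpa [hswap] using hnot (t (0, false))
    obtain rfl : b' = b := by simpa [(hcross 0).1] using htb
    exact ⟨m, n, c, t, ht, hcross⟩
  choose M N c hc using exists_crossing
  exact ⟨f, M, N, c, hf, hc⟩

end Parameters

section LoopIso

variable {A B C : Type*} {S : Set (Perm A)} {T : Set (Perm B)} {U : Set (Perm C)}

/-- Two sets of permutations are conjugate under a bijection of the underlying sets; for sets that
encode loops this is isomorphism of loops. -/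
def LoopIso (S : Set (Perm A)) (T : Set (Perm B)) : Prop :=
  ∃ e : A ≃ B, e.permCongr '' S = T

theorem LoopIso.symm : LoopIso S T → LoopIso T S := by
  rintro ⟨e, rfl⟩
  exact ⟨e.symm, e.permCongr.symm_image_image S⟩

theorem LoopIso.trans : LoopIso S T → LoopIso T U → LoopIso S U := by
  rintro ⟨e, rfl⟩ ⟨e', rfl⟩
  exact ⟨e.trans e', Set.image_comp e'.permCongr e.permCongr S⟩

theorem IsRCC.loopIso_of_mapsTo [Nonempty A] (hS : IsRCC S) (hT : IsRCC T) (e : A ≃ B)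
    (he : MapsTo e.permCongr S T) : LoopIso S T := by
  refine ⟨e, he.image_subset.antisymm fun t ht => ?_⟩
  obtain ⟨x⟩ := ‹Nonempty A›
  obtain ⟨s, hs, hsx⟩ := hS.exists_apply_eq x (e.symm (t (e x)))
  exact ⟨s, hs, hT.eq_of_apply_eq (he hs) ht (x := e x) (by simp [hsx])⟩

theorem orbitRel_conjAct_iff_loopIso {S T : Set (Perm A)} :
    MulAction.orbitRel (ConjAct (Perm A)) (Set (Perm A)) S T ↔ LoopIso T S := by
  rw [MulAction.orbitRel_apply, MulAction.mem_orbit_iff]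
  exact Iff.rfl

end LoopIso

section SideAffine

variable {p : ℕ} {e t : Perm (ZMod p × Bool)} {r u q v : ZMod p}

/-- `e` preserves both copies of `ZMod p`, acting on them by the affine maps `x ↦ r * x + u` and
`x ↦ q * x + v`. -/
def IsSideAffine (e : Perm (ZMod p × Bool)) (r u q v : ZMod p) : Prop :=
  ∀ x, e (x, false) = (r * x + u, false) ∧ e (x, true) = (q * x + v, true)

theorem exists_isSideAffine [Fact p.Prime] (hr : r ≠ 0) (hq : q ≠ 0) (u v : ZMod p) :
    ∃ e, IsSideAffine e r u q v :=
  ⟨Equiv.prodCongrLeft fun i => bif i then (Equiv.mulLeft₀ q hq).trans (Equiv.addRight v)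
    else (Equiv.mulLeft₀ r hr).trans (Equiv.addRight u), fun _ => ⟨rfl, rfl⟩⟩

namespace IsSideAffine

theorem ne_zero [Fact p.Prime] (he : IsSideAffine e r u q v) : r ≠ 0 ∧ q ≠ 0 := by
  refine ⟨?_, ?_⟩ <;> rintro rfl
  · simpa using e.injective ((he 0).1.trans (by rw [(he 1).1]; simp) : e (0, false) = e (1, false))
  · simpa using e.injective ((he 0).2.trans (by rw [(he 1).2]; simp) : e (0, true) = e (1, true))

theorem permCongr_translation (he : IsSideAffine e r u q v) (a a' : ZMod p) :
    e.permCongr (translation a a') = translation (r * a) (q * a') := by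
  change e * translation a a' * e⁻¹ = _
  rw [mul_inv_eq_iff_eq_mul]
  ext1 ⟨x, _ | _⟩ <;> simp [(he _).1, (he _).2] <;> ring

theorem permCongr_isCrossing [Fact p.Prime] (he : IsSideAffine e r u q v) {m b n c m' n' : ZMod p}
    (ht : IsCrossing t m b n c) (hm : m' * r = q * m) (hn : n' * q = r * n) :
    IsCrossing (e.permCongr t) m' (q * b + v - m' * u) n' (r * c + u - n' * v) := by
  obtain ⟨hr, hq⟩ := he.ne_zero
  intro x
  have symm_false : e.symm (x, false) = ((x - u) / r, false) := by
    rw [Equiv.symm_apply_eq, (he _).1, mul_div_cancel₀ _ hr, sub_add_cancel]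
  have symm_true : e.symm (x, true) = ((x - v) / q, true) := by
    rw [Equiv.symm_apply_eq, (he _).2, mul_div_cancel₀ _ hq, sub_add_cancel]
  rw [Equiv.permCongr_apply, Equiv.permCongr_apply, symm_false, symm_true, (ht _).1, (ht _).2,
    (he _).1, (he _).2]
  refine ⟨Prod.ext ?_ rfl, Prod.ext ?_ rfl⟩
  · field_simp
    linear_combination (u - x) * hm
  · field_simp
    linear_combination (v - x) * hn

end IsSideAffine

end SideAffine

section NormalForms

variable {p : ℕ} {f c : ZMod p → ZMod p} {m : ZMod p}

/-- The set of all translations by `(a, f a)` and all crossings `x ↦ m * x + b`, `x ↦ m * x + c b`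
of two copies of `ZMod p`. -/
def affineLoop (f : ZMod p → ZMod p) (m : ZMod p) (c : ZMod p → ZMod p) :
    Set (Perm (ZMod p × Bool)) :=
  {t | (∃ a, t = translation a (f a)) ∨ ∃ b, IsCrossing t m b m (c b)}

theorem IsRCC.of_conj_mem {X : Type*} [Finite X] {T : Set (Perm X)} (h1 : 1 ∈ T)
    (hT : ∀ x y : X, ∃! t, t ∈ T ∧ t x = y) (hconj : ∀ t ∈ T, ∀ s ∈ T, t * s * t⁻¹ ∈ T) :
    IsRCC T where
  one_mem := h1
  existsUnique_apply := hT
  inv_mul_mul_mem s hs t ht := by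
    have hmaps : MapsTo (fun s => t * s * t⁻¹) T T := hconj t ht
    obtain ⟨s', hs', rfl⟩ := ((T.toFinite.injOn_iff_bijOn_of_mapsTo hmaps).1
      (MulAut.conj t).injective.injOn).surjOn hs
    simpa [mul_assoc] using hs'

theorem existsUnique_affineLoop_apply [Fact p.Prime] (hm : m ≠ 0) (hf : Function.Bijective f)
    (hc : Function.Bijective c) (x y : ZMod p × Bool) :
    ∃! t, t ∈ affineLoop f m c ∧ t x = y := by
  have unique_translation {i} {z w : ZMod p} (h : ∃! a, z + (bif i then f a else a) = w) :
      ∃! t, t ∈ affineLoop f m c ∧ t (z, i) = (w, i) := by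
    obtain ⟨a, ha, huniq⟩ := h
    refine ⟨translation a (f a), ⟨.inl ⟨a, rfl⟩, Prod.ext ha rfl⟩, ?_⟩
    rintro _ ⟨⟨b, rfl⟩ | ⟨b, hb⟩, hzw⟩
    · rw [huniq b (congrArg Prod.fst hzw)]
    · cases i <;> simp [(hb _).1, (hb _).2] at hzw
  have unique_crossing {i} {z w : ZMod p} (h : ∃! b, m * z + (bif i then c b else b) = w) :
      ∃! t, t ∈ affineLoop f m c ∧ t (z, i) = (w, !i) := by
    obtain ⟨b, hb, huniq⟩ := h
    obtain ⟨t, ht⟩ := exists_isCrossing hm hm b (c b)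
    refine ⟨t, ⟨.inr ⟨b, ht⟩, ?_⟩, ?_⟩
    · cases i <;> simpa [(ht _).1, (ht _).2] using hb
    rintro s ⟨⟨a, rfl⟩ | ⟨b', hs⟩, hzw⟩
    · cases i <;> simp at hzw
    · obtain rfl := huniq b' (by cases i <;> simpa [(hs _).1, (hs _).2] using hzw)
      exact hs.ext ht
  have add_bijective {g : ZMod p → ZMod p} (hg : Function.Bijective g) (z w) : ∃! a, z + g a = w :=
    ((Equiv.addLeft z).bijective.comp hg).existsUnique w
  obtain ⟨z, _ | _⟩ := x <;> obtain ⟨w, _ | _⟩ := y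
  · exact unique_translation (add_bijective Function.bijective_id z w)
  · exact unique_crossing (add_bijective Function.bijective_id (m * z) w)
  · exact unique_crossing (add_bijective hc (m * z) w)
  · exact unique_translation (add_bijective hf z w)

theorem isRCC_affineLoop [Fact p.Prime] (hm : m ≠ 0) (hf0 : f 0 = 0)
    (hf : ∀ a, f (m * f a) = m * a)
    (hshift : ∀ a b, c (b + f a - m * a) = c b + a - m * f a)
    (hc : ∀ b d, c (m * (c d - c b) + b) = m * (d - b) + c b) :
    IsRCC (affineLoop f m c) := by
  have hf_inj : Function.Injective f := fun a b hab =>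
    mul_left_cancel₀ hm (by rw [← hf, hab, hf])
  have hc_inj : Function.Injective c := fun b d hbd => by
    have h := hc b d
    rw [hbd, sub_self, mul_zero, zero_add, hbd, eq_comm, add_eq_right, mul_eq_zero] at h
    exact (sub_eq_zero.1 (h.resolve_left hm)).symm
  refine .of_conj_mem (.inl ⟨0, by rw [hf0, translation_zero]⟩)
    (existsUnique_affineLoop_apply hm (Finite.injective_iff_bijective.1 hf_inj)
      (Finite.injective_iff_bijective.1 hc_inj)) ?_
  rintro t (⟨a, rfl⟩ | ⟨b, ht⟩) s (⟨a', rfl⟩ | ⟨b', hs⟩)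
  · refine .inl ⟨a', mul_inv_eq_of_eq_mul ?_⟩
    rw [translation_mul_translation, translation_mul_translation, add_comm a, add_comm (f a)]
  · exact .inr ⟨_, hshift a b' ▸ hs.translation_conj a (f a)⟩
  · exact .inl ⟨m * f a', by rw [hf, ht.conj_translation]⟩
  · exact .inr ⟨_, hc b b' ▸ ht.conj hs⟩

/-- The RCC loop of order `2p`, for `m ≠ 0`, consisting of the translations by `(a, a)` and of the
crossings that are `x ↦ m * x + b` on both copies of `ZMod p`. -/
def scalarLoop (m : ZMod p) : Set (Perm (ZMod p × Bool)) :=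
  affineLoop id m id

/-- The RCC loop of order `2p`, for an involution `g` of `ZMod p` fixing `0`, consisting of the
translations by `(a, g a)` and of the crossings `x ↦ x + b`, `x ↦ x + (k - b)`. -/
def involutionLoop (g : ZMod p → ZMod p) (k : ZMod p) : Set (Perm (ZMod p × Bool)) :=
  affineLoop g 1 (k - ·)

theorem isRCC_scalarLoop [Fact p.Prime] (hm : m ≠ 0) : IsRCC (scalarLoop m) :=
  isRCC_affineLoop hm rfl (fun _ => rfl) (fun _ _ => rfl) (fun _ _ => rfl)

theorem isRCC_involutionLoop [Fact p.Prime] (hf0 : f 0 = 0) (hf : Function.Involutive f)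
    (k : ZMod p) : IsRCC (involutionLoop f k) :=
  isRCC_affineLoop one_ne_zero hf0 (fun a => by rw [one_mul, one_mul, hf]) (fun _ _ => by ring)
    fun _ _ => by ring

end NormalForms

section Classification

variable {p : ℕ} [Fact p.Prime] {T : Set (Perm (ZMod p × Bool))} {f c : ZMod p → ZMod p}
  {m n k d : ZMod p}

theorem HasParameters.loopIso_affineLoop {M N f' c' : ZMod p → ZMod p} {m' r s : ZMod p}
    (hP : HasParameters T f M N c) (h : IsRCC T) (h' : IsRCC (affineLoop f' m' c')) (hr : r ≠ 0)
    (hf : ∀ a, f' a = r * f a) (hM : ∀ b, m' = r * M b) (hN : ∀ b, N b = m' * r)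
    (hc : ∀ b, c' (r * b + s) = c b - m' * s) : LoopIso T (affineLoop f' m' c') := by
  obtain ⟨e, he⟩ := exists_isSideAffine one_ne_zero hr 0 s
  refine h.loopIso_of_mapsTo h' e fun t ht => ?_
  obtain ⟨a, rfl⟩ | ⟨b, hb⟩ := hP.eq_translation_or_isCrossing h ht
  · exact .inl ⟨a, by rw [he.permCongr_translation, one_mul, hf]⟩
  · have hcross := he.permCongr_isCrossing hb (m' := m') (n' := m') (by rw [mul_one, hM b])
      (by rw [one_mul, hN])
    rw [one_mul, add_zero, mul_zero, sub_zero, ← hc] at hcross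
    exact .inr ⟨_, hcross⟩

theorem exists_eq_mul_add_of_map_conj {l : ZMod p} (hl : l ≠ 0) (hinj : Function.Injective c)
    (hc : ∀ b d, c (l * (c d - c b) + b) = l⁻¹ * (d - b) + c b) :
    ∃ k d, ∀ x, c x = k * x + d := by
  let g : ZMod p → ZMod p := fun b => b - l * c b
  have c_add (b d) : c (g b + l * c d) = l⁻¹ * (d - g b) := by
    have h := hc b d
    rw [show l * (c d - c b) + b = g b + l * c d by simp only [g]; ring] at h
    rw [h]
    simp only [g]
    field_simp
    ring
  by_cases hg : ∃ b b', g b ≠ g b'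
  · obtain ⟨b, b', hbb'⟩ := hg
    have c_shift (x) : c (x + (g b - g b')) = c x + -(l⁻¹ * (g b - g b')) := by
      obtain ⟨d, hd⟩ := Finite.surjective_of_injective hinj (l⁻¹ * (x - g b'))
      have hx : x = g b' + l * c d := by rw [hd, mul_inv_cancel_left₀ hl, add_sub_cancel]
      rw [show x + (g b - g b') = g b + l * c d by rw [hx]; ring, hx, c_add, c_add]
      ring
    exact ⟨_, _, eq_mul_add_of_apply_add (sub_ne_zero.2 hbb') c_shift⟩
  · push Not at hg
    refine ⟨l⁻¹, -(l⁻¹ * g 0), fun x => ?_⟩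
    rw [← hg x 0]
    simp only [g]
    field_simp
    ring

namespace HasParameters

theorem exists_affine {M N : ZMod p → ZMod p} (hP : HasParameters T f M N c) (h : IsRCC T) :
    ∃ m n k d, HasParameters T f (fun _ => m) (fun _ => n) (fun b => k * b + d) := by
  have map_mul_map := hP.map_mul_map h
  by_cases hlin : ∀ a b, f a = M b * a
  · have M_eq (b) : M b = f 1 := by rw [hlin 1 b, mul_one]
    have hf1 : f 1 ≠ 0 := M_eq 0 ▸ (hP.ne_zero 0).1
    have N_eq (b) : N b = (f 1)⁻¹ := by
      have h₁ := map_mul_map 1 b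
      rw [hlin _ b, M_eq, mul_one, mul_eq_left₀ hf1] at h₁
      exact eq_inv_of_mul_eq_one_left h₁
    obtain rfl : M = fun _ => f 1 := funext M_eq
    obtain rfl : N = fun _ => (f 1)⁻¹ := funext N_eq
    obtain ⟨k, d, hc⟩ :=
      exists_eq_mul_add_of_map_conj hf1 (hP.injective_crossing h) (hP.map_conj_crossing h)
    exact ⟨_, _, k, d, funext hc ▸ hP⟩
  · push Not at hlin
    obtain ⟨a, b, hab⟩ := hlin
    have hδ : f a - M b * a ≠ 0 := sub_ne_zero.2 hab
    obtain ⟨m, n, hMN⟩ : ∃ m n, ∀ x, M x = m ∧ N x = n := by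
      refine ⟨M b, N b, zmod_induction_add hδ (fun x hx => ?_) ⟨rfl, rfl⟩⟩
      have hshift := hP.shift_eq h a x
      rw [hx.1, hx.2] at hshift
      exact ⟨hshift.1, hshift.2.1⟩
    obtain rfl : M = fun _ => m := funext fun x => (hMN x).1
    obtain rfl : N = fun _ => n := funext fun x => (hMN x).2
    have hc := eq_mul_add_of_apply_add hδ fun x => (hP.shift_eq h a x).2.2
    exact ⟨_, _, _, _, funext hc ▸ hP⟩

theorem mul_apply_sub (hP : HasParameters T f (fun _ => m) (fun _ => n) fun b => k * b + d)
    (h : IsRCC T) (a : ZMod p) : k * (f a - m * a) = a - n * f a := by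
  linear_combination (hP.shift_eq h a 0).2.2

theorem sq_mul_eq (hP : HasParameters T f (fun _ => m) (fun _ => n) fun b => k * b + d)
    (h : IsRCC T) : k ^ 2 * m = n := by
  linear_combination hP.map_conj_crossing h 0 1

theorem loopIso_involutionLoop
    (hP : HasParameters T f (fun _ => m) (fun _ => n) fun b => -n * b + d) (h : IsRCC T) :
    ∃ g, g 0 = 0 ∧ Function.Involutive g ∧ LoopIso T (involutionLoop g d) := by
  have hn : n ≠ 0 := (hP.ne_zero 0).2
  have hnm : n * m = 1 := mul_left_cancel₀ hn (by linear_combination hP.sq_mul_eq h)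
  have hg0 : n * f 0 = 0 := by rw [hP.map_zero h, mul_zero]
  have hg : Function.Involutive fun a => n * f a := fun a => by
    simp only [hP.map_mul_map h a 0]
    rw [← mul_assoc, hnm, one_mul]
  refine ⟨_, hg0, hg, hP.loopIso_affineLoop h (isRCC_involutionLoop hg0 hg d) hn (s := 0)
    (fun _ => rfl) (fun _ => hnm.symm) (fun _ => (one_mul n).symm) fun b => ?_⟩
  ring

theorem mul_eq_one_of_map_eq_mul {l : ZMod p}
    (hP : HasParameters T f (fun _ => m) (fun _ => n) fun b => k * b + d) (h : IsRCC T)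
    (hk : k ≠ -n) (hl : l ≠ 0) (hf : ∀ a, f a = l * a) : k * l = 1 := by
  have hlnl : l * (n * l) = m := by
    simpa only [hf, mul_one] using hP.map_mul_map h 1 0
  have hkl : k * (l - m) = 1 - n * l := by
    simpa only [hf, mul_one] using hP.mul_apply_sub h 1
  by_contra hne
  obtain rfl : l = m := by
    refine sub_eq_zero.1 ((mul_eq_zero.1 ?_).resolve_right (sub_ne_zero.2 hne))
    linear_combination l * hkl - hlnl
  have hnl : n * l = 1 := by linear_combination hkl
  have hkl' : k * l + 1 = 0 := by
    refine (mul_eq_zero.1 ?_).resolve_left (sub_ne_zero.2 hne)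
    linear_combination l * hP.sq_mul_eq h + hnl
  exact hk (mul_right_cancel₀ hl (by linear_combination hkl' + hnl))

theorem loopIso_scalarLoop
    (hP : HasParameters T f (fun _ => m) (fun _ => n) fun b => k * b + d) (h : IsRCC T)
    (hk : k ≠ -n) : ∃ μ : ZMod p, μ ≠ 0 ∧ μ ≠ -1 ∧ LoopIso T (scalarLoop μ) := by
  have hkn : k + n ≠ 0 := fun h => hk (eq_neg_of_add_eq_zero_left h)
  have hn : n = k ^ 2 * m := (hP.sq_mul_eq h).symm
  obtain ⟨l, hf⟩ : ∃ l, ∀ a, f a = l * a := by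
    refine ⟨(1 + k * m) / (k + n), fun a => ?_⟩
    field_simp
    linear_combination hP.mul_apply_sub h a
  have hl : l ≠ 0 := by
    rintro rfl
    exact zero_ne_one (hP.injective_translation h (by rw [hf, hf, zero_mul, zero_mul]))
  have hm : m ≠ 0 := (hP.ne_zero 0).1
  have hkl : k * l = 1 := hP.mul_eq_one_of_map_eq_mul h hk hl hf
  have hμ : m / l ≠ -1 := fun hml => hk <| by
    rw [div_eq_iff hl] at hml
    linear_combination -k * hkl + k ^ 2 * hml + hn
  have hμ' : 1 + m / l ≠ 0 := fun h => hμ (eq_neg_of_add_eq_zero_right h)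
  have hkl' : k = l⁻¹ := eq_inv_of_mul_eq_one_left hkl
  have hμ0 : m / l ≠ 0 := div_ne_zero hm hl
  refine ⟨m / l, hμ0, hμ, hP.loopIso_affineLoop h (isRCC_scalarLoop hμ0) (inv_ne_zero hl)
    (s := d / (1 + m / l)) (fun a => ?_) (fun _ => ?_) (fun _ => ?_) fun b => ?_⟩
  · rw [hf, inv_mul_cancel_left₀ hl, id]
  · rw [inv_mul_eq_div]
  · rw [hn, hkl']
    field_simp
  · rw [hkl', id]
    linear_combination div_mul_cancel₀ d hμ'

end HasParameters

theorem IsRCC.loopIso_scalarLoop_or_involutionLoop {X : Type*} {S : Set (Perm X)} (h : IsRCC S)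
    (hX : Nat.card X = 2 * p) :
    (∃ m : ZMod p, m ≠ 0 ∧ m ≠ -1 ∧ LoopIso S (scalarLoop m)) ∨
      ∃ (g : ZMod p → ZMod p) (k : ZMod p), g 0 = 0 ∧ Function.Involutive g ∧
        LoopIso S (involutionLoop g k) := by
  obtain ⟨e, he⟩ := h.exists_equiv_translation_or_swap hX
  have hiso : LoopIso S (e.permCongr '' S) := ⟨e, rfl⟩
  obtain ⟨f, M, N, c, hP⟩ := (h.image e).exists_hasParameters he
  obtain ⟨m, n, k, d, hP⟩ := hP.exists_affine (h.image e)
  by_cases hk : k = -n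
  · subst hk
    obtain ⟨g, hg0, hg, hloop⟩ := hP.loopIso_involutionLoop (h.image e)
    exact .inr ⟨g, d, hg0, hg, hiso.trans hloop⟩
  · obtain ⟨m, hm0, hm1, hloop⟩ := hP.loopIso_scalarLoop (h.image e) hk
    exact .inl ⟨m, hm0, hm1, hiso.trans hloop⟩

end Classification

section Uniqueness

variable {p : ℕ} {f f' c c' g g' : ZMod p → ZMod p} {m m' k k' : ZMod p}

theorem translation_pow (a a' : ZMod p) (n : ℕ) :
    translation a a' ^ n = translation ((n : ZMod p) * a) ((n : ZMod p) * a') := by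
  induction n with
  | zero => rw [pow_zero, Nat.cast_zero, zero_mul, zero_mul, translation_zero]
  | succ n ih =>
    rw [pow_succ, ih, translation_mul_translation, Nat.cast_succ, add_one_mul, add_one_mul]

theorem pow_ne_one_of_odd {t : Perm (ZMod p × Bool)} (ht : ∀ z, (t z).2 = !z.2) {n : ℕ}
    (hn : Odd n) : t ^ n ≠ 1 := by
  intro h
  have hsemiconj : Function.Semiconj Prod.snd (t ^ n) not := by
    have hodd := (show Function.Semiconj Prod.snd t not from ht).iterate_right n
    rwa [Bool.involutive_not.iterate_odd hn, ← Equiv.Perm.coe_pow] at hodd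
  simpa [h] using hsemiconj (0, false)

theorem snd_eq_or_snd_eq_not {e : Perm (ZMod p × Bool)} (hf : Function.Surjective f)
    (he : ∀ a, ∃ b b', e.permCongr (translation a (f a)) = translation b b') :
    (∀ z, (e z).2 = z.2) ∨ ∀ z, (e z).2 = !z.2 := by
  have snd_translation (a z) : (e (translation a (f a) z)).2 = (e z).2 := by
    obtain ⟨b, b', h⟩ := he a
    have hz : e (translation a (f a) z) = translation b b' (e z) := by simp [← h]
    rw [hz]
    rfl
  have snd_eq (x i) : (e (x, i)).2 = (e (0, i)).2 := by
    obtain ⟨a, rfl⟩ : ∃ a, x = bif i then f a else a := by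
      cases i
      · exact ⟨x, rfl⟩
      · exact (hf x).imp fun _ h => h.symm
    simpa [translation] using snd_translation a (0, i)
  have hsurj (j) : (e (0, false)).2 = j ∨ (e (0, true)).2 = j := by
    obtain ⟨⟨x, i⟩, hx⟩ := e.surjective (0, j)
    have h := (snd_eq x i).symm.trans (congrArg Prod.snd hx)
    cases i
    · exact .inl h
    · exact .inr h
  have hne : (e (0, true)).2 ≠ (e (0, false)).2 := fun heq => by
    simpa [heq] using hsurj (!(e (0, false)).2)
  cases hside : (e (0, false)).2
  · have hside' := Bool.eq_true_of_not_eq_false (hside ▸ hne)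
    exact .inl fun ⟨x, i⟩ => by cases i <;> simp [snd_eq x, hside, hside']
  · have hside' := Bool.eq_false_of_not_eq_true (hside ▸ hne)
    exact .inr fun ⟨x, i⟩ => by cases i <;> simp [snd_eq x, hside, hside']

theorem permCongr_swapSides_translation (a a' : ZMod p) :
    (swapSides (ZMod p)).permCongr (translation a a') = translation a' a := by
  ext1 ⟨x, _ | _⟩ <;> rfl

theorem mapsTo_permCongr_swapSides (hf : Function.Involutive f) (hc : Function.Involutive c) :
    MapsTo (swapSides (ZMod p)).permCongr (affineLoop f m c) (affineLoop f m c) := by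
  rintro t (⟨a, rfl⟩ | ⟨b, ht⟩)
  · exact .inl ⟨f a, by rw [hf, permCongr_swapSides_translation]⟩
  · refine .inr ⟨c b, fun x => ?_⟩
    rw [hc]
    exact ⟨congrArg (swapSides _) (ht x).2, congrArg (swapSides _) (ht x).1⟩

theorem eq_id_of_involutive_zmod_two {g : ZMod 2 → ZMod 2} (hg0 : g 0 = 0)
    (hg : Function.Involutive g) : g = id := by
  unfold Function.Involutive at hg
  decide +revert

section Affine

variable [Fact p.Prime]

theorem hasParameters_affineLoop (hm : m ≠ 0) :
    HasParameters (affineLoop f m c) f (fun _ => m) (fun _ => m) c where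
  translation_mem a := .inl ⟨a, rfl⟩
  exists_isCrossing b := (exists_isCrossing hm hm b (c b)).imp fun _ ht => ⟨.inr ⟨b, ht⟩, ht⟩

theorem exists_permCongr_translation_eq (hp2 : p ≠ 2) {e : Perm (ZMod p × Bool)}
    (he : MapsTo e.permCongr (affineLoop f m c) (affineLoop f' m' c')) (a : ZMod p) :
    ∃ b b', e.permCongr (translation a (f a)) = translation b b' := by
  obtain ⟨b, hb⟩ | ⟨b, ht⟩ := he (.inl ⟨a, rfl⟩)
  · exact ⟨b, f' b, hb⟩
  · have hswap (z) : (e.permCongr (translation a (f a)) z).2 = !z.2 := by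
      obtain ⟨x, _ | _⟩ := z
      · rw [(ht x).1]; rfl
      · rw [(ht x).2]; rfl
    refine absurd ?_ (pow_ne_one_of_odd hswap ((Fact.out : p.Prime).odd_of_ne_two hp2))
    change (e.permCongrHom (translation a (f a))) ^ p = 1
    rw [← map_pow, translation_pow, CharP.cast_eq_zero, zero_mul, zero_mul, translation_zero,
      map_one]

theorem exists_isSideAffine_of_snd_eq {e : Perm (ZMod p × Bool)} (he : ∀ z, (e z).2 = z.2)
    (hf : Function.Surjective f)
    (htrans : ∀ a, ∃ b b', e.permCongr (translation a (f a)) = translation b b') :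
    ∃ r u q v, IsSideAffine e r u q v := by
  obtain ⟨r, u, q, v, h⟩ := exists_isCrossing_of_conj_translation (t := swapSides _ * e)
    (fun z => congrArg not (he z)) hf fun a => by
      obtain ⟨b, b', hb⟩ := htrans a
      refine ⟨b', b, ?_⟩
      rw [← permCongr_swapSides_translation b, ← hb]
      rfl
  refine ⟨r, u, q, v, fun x => ⟨?_, ?_⟩⟩
  · exact (swapSides _).injective (h x).1
  · exact (swapSides _).injective (h x).2

theorem exists_isSideAffine_of_mapsTo (hp2 : p ≠ 2) (hf : Function.Surjective f)
    (hf' : Function.Involutive f') (hc' : Function.Involutive c') {e : Perm (ZMod p × Bool)}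
    (he : MapsTo e.permCongr (affineLoop f m c) (affineLoop f' m' c')) :
    ∃ e' r u q v, IsSideAffine e' r u q v ∧
      MapsTo e'.permCongr (affineLoop f m c) (affineLoop f' m' c') := by
  have htrans := exists_permCongr_translation_eq hp2 he
  obtain hsnd | hsnd := snd_eq_or_snd_eq_not hf htrans
  · obtain ⟨r, u, q, v, haffine⟩ := exists_isSideAffine_of_snd_eq hsnd hf htrans
    exact ⟨e, r, u, q, v, haffine, he⟩
  · have he' : MapsTo (swapSides _ * e).permCongr (affineLoop f m c) (affineLoop f' m' c') :=
      (mapsTo_permCongr_swapSides hf' hc').comp he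
    obtain ⟨r, u, q, v, haffine⟩ := exists_isSideAffine_of_snd_eq (e := swapSides _ * e)
      (fun z => (congrArg not (hsnd z)).trans (Bool.not_not _)) hf
      (exists_permCongr_translation_eq hp2 he')
    exact ⟨_, r, u, q, v, haffine, he'⟩

theorem LoopIso.exists_params (hp2 : p ≠ 2)
    (hS : IsRCC (affineLoop f m c)) (hT : IsRCC (affineLoop f' m' c')) (hm : m ≠ 0) (hm' : m' ≠ 0)
    (hf' : Function.Involutive f') (hc' : Function.Involutive c')
    (h : LoopIso (affineLoop f m c) (affineLoop f' m' c')) :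
    ∃ r q u v, r ≠ 0 ∧ (∀ a, q * f a = f' (r * a)) ∧ q * m = m' * r ∧ r * m = m' * q ∧
      ∀ b, c' (q * b + v - m' * u) = r * c b + u - m' * v := by
  have hP := hasParameters_affineLoop (f := f) (c := c) hm
  have hP' := hasParameters_affineLoop (f := f') (c := c') hm'
  obtain ⟨e₀, he₀⟩ := h
  obtain ⟨e, r, u, q, v, he, hmaps⟩ := exists_isSideAffine_of_mapsTo hp2
    (Finite.surjective_of_injective (hP.injective_translation hS)) hf' hc'
    (Set.mapsTo_iff_image_subset.2 he₀.subset)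
  obtain ⟨hr, hq⟩ := he.ne_zero
  have hcross (b) : q * m / r = m' ∧ r * m / q = m' ∧
      r * c b + u - r * m / q * v = c' (q * b + v - q * m / r * u) := by
    obtain ⟨t, ht, htb⟩ := hP.exists_isCrossing b
    exact hP'.eq_of_isCrossing hT (hmaps ht) (he.permCongr_isCrossing htb
      (div_mul_cancel₀ _ hr) (div_mul_cancel₀ _ hq))
  refine ⟨r, q, u, v, hr, fun a => ?_, (div_eq_iff hr).1 (hcross 0).1,
    (div_eq_iff hq).1 (hcross 0).2.1, fun b => ?_⟩
  · have hmem := hmaps (hP.translation_mem a)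
    rw [he.permCongr_translation] at hmem
    exact hP'.eq_of_translation_mem hT hmem
  · obtain ⟨h₁, h₂, h₃⟩ := hcross b
    rw [h₁, h₂] at h₃
    exact h₃.symm

theorem eq_of_loopIso_scalarLoop (hm : m ≠ 0) (hm' : m' ≠ 0)
    (h : LoopIso (scalarLoop m) (scalarLoop m')) : m = m' := by
  by_cases hp2 : p = 2
  · subst hp2
    rw [Fin.eq_one_of_ne_zero m hm, Fin.eq_one_of_ne_zero m' hm']
  obtain ⟨r, q, -, -, hr, hf, hqm, -⟩ := LoopIso.exists_params hp2 (isRCC_scalarLoop hm)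
    (isRCC_scalarLoop hm') hm hm' (fun _ => rfl) (fun _ => rfl) h
  obtain rfl : q = r := by simpa using hf 1
  exact mul_left_cancel₀ hr (hqm.trans (mul_comm _ _))

theorem not_loopIso_scalarLoop_involutionLoop (hm : m ≠ 0) (hm1 : m ≠ -1) (hg0 : g 0 = 0)
    (hg : Function.Involutive g) : ¬LoopIso (scalarLoop m) (involutionLoop g k) := by
  intro h
  by_cases hp2 : p = 2
  · subst hp2
    exact hm1 (Fin.eq_one_of_ne_zero m hm)
  obtain ⟨r, q, u, v, hr, -, hqm, hrm, hc⟩ := LoopIso.exists_params hp2 (isRCC_scalarLoop hm)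
    (isRCC_involutionLoop hg0 hg k) hm one_ne_zero hg (sub_sub_cancel k) h
  obtain rfl : m = 1 := by
    have hm1' : m + 1 ≠ 0 := fun h => hm1 (eq_neg_of_add_eq_zero_left h)
    refine sub_eq_zero.1 ((mul_eq_zero.1 (mul_left_cancel₀ hr ?_)).resolve_right hm1')
    linear_combination m * hrm + hqm
  refine mul_ne_zero (two_ne_zero_of_prime_ne_two hp2) hr ?_
  have h₀ := hc 0
  have h₁ := hc 1
  simp only [id] at h₀ h₁
  linear_combination h₀ - h₁ - hqm

theorem IsCrossing.mul_self_eq_translation {t : Perm (ZMod p × Bool)} {b d : ZMod p}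
    (ht : IsCrossing t 1 b 1 d) : t * t = translation (b + d) (d + b) := by
  ext1 ⟨x, _ | _⟩ <;> simp [(ht _).1, (ht _).2, add_assoc]

theorem forall_involutionLoop_mul_self_eq_one_iff {k : ZMod 2} :
    (∀ t ∈ involutionLoop id k, t * t = 1) ↔ k = 0 := by
  have mul_self {t} {b : ZMod 2} (ht : IsCrossing t 1 b 1 (k - b)) : t * t = translation k k := by
    rw [ht.mul_self_eq_translation, add_sub_cancel, sub_add_cancel]
  refine ⟨fun h => ?_, ?_⟩
  · obtain ⟨t, ht⟩ := exists_isCrossing (p := 2) one_ne_zero one_ne_zero 0 (k - 0)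
    rw [← translation_zero] at h
    exact (translation_inj.1 ((mul_self ht).symm.trans (h t (.inr ⟨0, ht⟩)))).1
  · rintro rfl t (⟨a, rfl⟩ | ⟨b, ht⟩)
    · rw [translation_mul_translation, id, CharTwo.add_self_eq_zero, translation_zero]
    · rw [mul_self ht, translation_zero]

theorem LoopIso.forall_mul_self_eq_one {A B : Type*} {S : Set (Perm A)} {T : Set (Perm B)}
    (h : LoopIso S T) (hS : ∀ t ∈ S, t * t = 1) : ∀ t ∈ T, t * t = 1 := by
  obtain ⟨e, rfl⟩ := h
  rintro _ ⟨t, ht, rfl⟩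
  change e.permCongrHom t * e.permCongrHom t = 1
  rw [← map_mul, hS t ht, map_one]

theorem loopIso_involutionLoop_two {k k' : ZMod 2}
    (h : LoopIso (involutionLoop id k) (involutionLoop id k')) : k = k' := by
  have zero_iff : k = 0 ↔ k' = 0 := by
    rw [← forall_involutionLoop_mul_self_eq_one_iff, ← forall_involutionLoop_mul_self_eq_one_iff]
    exact ⟨h.forall_mul_self_eq_one, h.symm.forall_mul_self_eq_one⟩
  clear h
  decide +revert

theorem loopIso_involutionLoop_iff (hg0 : g 0 = 0) (hg : Function.Involutive g) (hg0' : g' 0 = 0)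
    (hg' : Function.Involutive g') :
    LoopIso (involutionLoop g k) (involutionLoop g' k') ↔
      ∃ r ≠ 0, (∀ a, g' (r * a) = r * g a) ∧ k' = r * k := by
  refine ⟨fun h => ?_, ?_⟩
  · by_cases hp2 : p = 2
    · subst hp2
      obtain rfl := eq_id_of_involutive_zmod_two hg0 hg
      obtain rfl := eq_id_of_involutive_zmod_two hg0' hg'
      exact ⟨1, one_ne_zero, fun _ => by rw [id, id], by rw [loopIso_involutionLoop_two h, one_mul]⟩
    obtain ⟨r, q, u, v, hr, hgg', hqr, -, hc⟩ := LoopIso.exists_params hp2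
      (isRCC_involutionLoop hg0 hg k) (isRCC_involutionLoop hg0' hg' k') one_ne_zero one_ne_zero
      hg' (sub_sub_cancel k') h
    obtain rfl : q = r := by simpa using hqr
    exact ⟨q, hr, fun a => (hgg' a).symm, by linear_combination hc 0⟩
  · rintro ⟨r, hr, hgg', rfl⟩
    obtain ⟨e, he⟩ := exists_isSideAffine hr hr 0 0
    refine (isRCC_involutionLoop hg0 hg k).loopIso_of_mapsTo
      (isRCC_involutionLoop hg0' hg' (r * k)) e ?_
    rintro t (⟨a, rfl⟩ | ⟨b, ht⟩)
    · exact .inl ⟨r * a, by rw [he.permCongr_translation, hgg']⟩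
    · refine .inr ⟨r * b, ?_⟩
      convert he.permCongr_isCrossing ht (m' := 1) (n' := 1) (mul_comm _ _) (mul_comm _ _) using 1
        <;> ring

end Affine

end Uniqueness

section Counting

theorem Icd_eq_card {α : Type*} {n : ℕ} {σ : Perm α} (e : ZMod n ≃ α)
    (he : e.permCongr (stdCycle n) = σ) (d : ℕ) :
    Icd n d = Nat.card {τ : Perm α // τ ^ 2 = 1 ∧ Commute τ (σ ^ d)} := by
  subst he
  refine Nat.card_congr (e.permCongrHom.toEquiv.subtypeEquiv fun τ => and_congr ?_ ?_)
  · change _ ↔ e.permCongrHom τ ^ 2 = 1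
    rw [← map_pow, map_eq_one_iff _ e.permCongrHom.injective]
  · change _ ↔ Commute (e.permCongrHom τ) (e.permCongrHom (stdCycle n) ^ d)
    rw [← map_pow, commute_map_iff e.permCongrHom.injective]

theorem sum_eq_sum_Icc_pow {G M : Type*} [Group G] [Fintype G] [AddCommMonoid M] {g : G}
    (hg : ∀ x, x ∈ Subgroup.zpowers g) (F : G → M) :
    ∑ x, F x = ∑ d ∈ Finset.Icc 1 (Nat.card G), F (g ^ d) := by
  classical
  have hinj : Set.InjOn (g ^ ·) (Finset.range (Nat.card G)) := by
    rw [Finset.coe_range, ← orderOf_eq_card_of_forall_mem_zpowers hg]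
    exact pow_injOn_Iio_orderOf
  have hIcc :
      Finset.Icc 1 (Nat.card G) = (Finset.range (Nat.card G)).map (addRightEmbedding 1) := by
    rw [Finset.range_eq_Ico, Finset.map_add_right_Ico, zero_add]
    rfl
  rw [hIcc, Finset.sum_map, ← Equiv.sum_comp (Equiv.mulRight g), ← IsCyclic.image_range_card hg,
    Finset.sum_image hinj]
  exact Finset.sum_congr rfl fun d _ => by rw [addRightEmbedding_apply, pow_succ]; rfl

theorem ncard_range_eq_card_quotient {α β : Type*} {s : Setoid α} {F : α → β}
    (hF : ∀ x y, F x = F y ↔ s x y) : (Set.range F).ncard = Nat.card (Quotient s) := by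
  obtain rfl : s = Setoid.ker F := Setoid.ext fun x y => (hF x y).symm
  exact (Nat.card_congr (Setoid.quotientKerEquivRange F)).symm

variable {p : ℕ}

/-- The parameters of the loops `involutionLoop g k`: the restriction of `g` to the nonzero elements
of `ZMod p`, which is a permutation of square `1`, and `k`. -/
def InvolutionParam (p : ℕ) : Type :=
  {f : Perm (ZMod p)ˣ // f ^ 2 = 1} × ZMod p

/-- A unit acts on the permutation by conjugation with the multiplication by this unit, and on `k`
by multiplication. -/
instance : MulAction (ZMod p)ˣ (InvolutionParam p) where
  smul c x :=
    (⟨MulAut.conj (MulAction.toPermHom _ _ c) x.1.1, by rw [← map_pow, x.1.2, map_one]⟩, c * x.2)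
  one_smul x := by
    refine Prod.ext (Subtype.ext ?_) ?_
    · change MulAut.conj (MulAction.toPermHom _ _ 1) x.1.1 = x.1.1
      rw [map_one, map_one, MulAut.one_apply]
    · change ((1 : (ZMod p)ˣ) : ZMod p) * x.2 = x.2
      rw [Units.val_one, one_mul]
  mul_smul c d x := by
    refine Prod.ext (Subtype.ext ?_) ?_
    · change MulAut.conj (MulAction.toPermHom _ _ (c * d)) x.1.1 =
        MulAut.conj (MulAction.toPermHom _ _ c) (MulAut.conj (MulAction.toPermHom _ _ d) x.1.1)
      rw [map_mul, map_mul, MulAut.mul_apply]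
    · change ((c * d : (ZMod p)ˣ) : ZMod p) * x.2 = c * (d * x.2)
      rw [Units.val_mul, mul_assoc]

instance [NeZero p] : Finite (InvolutionParam p) :=
  inferInstanceAs (Finite ({f : Perm (ZMod p)ˣ // f ^ 2 = 1} × ZMod p))

namespace InvolutionParam

theorem smul_eq_iff {c : (ZMod p)ˣ} {x y : InvolutionParam p} :
    c • x = y ↔
      MulAction.toPermHom _ _ c * x.1.1 = y.1.1 * MulAction.toPermHom _ _ c ∧ c * x.2 = y.2 := by
  rw [← mul_inv_eq_iff_eq_mul]
  exact Prod.ext_iff.trans (and_congr_left' Subtype.ext_iff)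

/-- The number of permutations of square `1` that commute with the multiplication by `c`. -/
noncomputable def cardCommute (c : (ZMod p)ˣ) : ℕ :=
  Nat.card {f : Perm (ZMod p)ˣ // f ^ 2 = 1 ∧ Commute f (MulAction.toPermHom _ _ c)}

theorem card_fixedBy [Fact p.Prime] (c : (ZMod p)ˣ) :
    Nat.card (MulAction.fixedBy (InvolutionParam p) c) =
      cardCommute c * (if c = 1 then p else 1) := by
  let split : MulAction.fixedBy (InvolutionParam p) c ≃
      {f : Perm (ZMod p)ˣ // f ^ 2 = 1 ∧ Commute f (MulAction.toPermHom _ _ c)} ×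
        {k : ZMod p // c * k = k} :=
    { toFun x := (⟨x.1.1.1, x.1.1.2, (smul_eq_iff.1 x.2).1.symm⟩, ⟨x.1.2, (smul_eq_iff.1 x.2).2⟩)
      invFun y := ⟨(⟨y.1.1, y.1.2.1⟩, y.2.1), smul_eq_iff.2 ⟨y.1.2.2.symm, y.2.2⟩⟩
      left_inv _ := rfl
      right_inv _ := rfl }
  rw [Nat.card_congr split, Nat.card_prod, cardCommute]
  congr 1
  split_ifs with hc
  · subst hc
    rw [Nat.card_congr (Equiv.subtypeUnivEquiv fun k => by rw [Units.val_one, one_mul]),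
      Nat.card_zmod]
  · have fixed_iff (k : ZMod p) : c * k = k ↔ k = 0 := by
      rw [mul_left_eq_self₀, Units.val_eq_one, or_iff_right hc]
    simp only [fixed_iff, Nat.card_unique]

theorem cardCommute_pow [Fact p.Prime] {g : (ZMod p)ˣ} (hg : ∀ x, x ∈ Subgroup.zpowers g) (d : ℕ) :
    cardCommute (g ^ d) = Icd (p - 1) d := by
  have hcard : Nat.card (ZMod p)ˣ = p - 1 := by rw [Nat.card_eq_fintype_card, ZMod.card_units]
  let exp := zmodMulEquivOfGenerator hg hcard
  have hexp : (Multiplicative.ofAdd.trans exp.toEquiv).permCongr (stdCycle (p - 1)) =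
      MulAction.toPermHom _ _ g := by
    ext1 x
    obtain ⟨y, rfl⟩ := (Multiplicative.ofAdd.trans exp.toEquiv).surjective x
    rw [Equiv.permCongr_apply, Equiv.symm_apply_apply]
    change exp (Multiplicative.ofAdd (y + 1)) = g * exp (Multiplicative.ofAdd y)
    rw [ofAdd_add, map_mul, zmodMulEquivOfGenerator_apply_ofAdd_one, mul_comm]
  rw [Icd_eq_card _ hexp, cardCommute, map_pow]

theorem card_orbits [Fact p.Prime] :
    (p - 1) * Nat.card (Quotient (MulAction.orbitRel (ZMod p)ˣ (InvolutionParam p))) =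
      (p - 1) * Icd (p - 1) (p - 1) + ∑ d ∈ Finset.Icc 1 (p - 1), Icd (p - 1) d := by
  classical
  have := Fintype.ofFinite (InvolutionParam p)
  obtain ⟨g, hg⟩ := IsCyclic.exists_generator (α := (ZMod p)ˣ)
  have hcard : Nat.card (ZMod p)ˣ = p - 1 := by rw [Nat.card_eq_fintype_card, ZMod.card_units]
  have card_fixedBy_eq (c : (ZMod p)ˣ) :
      Fintype.card (MulAction.fixedBy (InvolutionParam p) c) =
        (if c = 1 then (p - 1) * cardCommute c else 0) + cardCommute c := by
    rw [← Nat.card_eq_fintype_card, card_fixedBy]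
    split_ifs
    · rw [← Nat.succ_mul, Nat.succ_eq_add_one, Nat.sub_add_cancel (NeZero.one_le), mul_comm]
    · rw [mul_one, zero_add]
  calc (p - 1) * Nat.card (Quotient (MulAction.orbitRel (ZMod p)ˣ (InvolutionParam p)))
      = ∑ c : (ZMod p)ˣ, Fintype.card (MulAction.fixedBy (InvolutionParam p) c) := by
        rw [MulAction.sum_card_fixedBy_eq_card_orbits_mul_card_group, ZMod.card_units, mul_comm,
          Nat.card_eq_fintype_card]
    _ = (p - 1) * cardCommute (1 : (ZMod p)ˣ) + ∑ c : (ZMod p)ˣ, cardCommute c := by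
        rw [Finset.sum_congr rfl fun c _ => card_fixedBy_eq c, Finset.sum_add_distrib,
          Finset.sum_ite_eq' Finset.univ, if_pos (Finset.mem_univ _)]
    _ = (p - 1) * Icd (p - 1) (p - 1) + ∑ d ∈ Finset.Icc 1 (p - 1), Icd (p - 1) d := by
        rw [sum_eq_sum_Icc_pow hg, ← pow_card_eq_one' (x := g), hcard]
        simp only [cardCommute_pow hg]

end InvolutionParam

end Counting

section ExtendUnits

variable {G₀ : Type*} [GroupWithZero G₀] [DecidableEq G₀]

/-- The extension by `0 ↦ 0` of a permutation of the units. -/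
def extendUnits (f : Perm G₀ˣ) : Perm G₀ :=
  f.extendDomain unitsEquivNeZero

theorem extendUnits_zero (f : Perm G₀ˣ) : extendUnits f 0 = 0 :=
  f.extendDomain_apply_not_subtype _ (not_not.2 rfl)

theorem extendUnits_val (f : Perm G₀ˣ) (u : G₀ˣ) : extendUnits f u = f u :=
  f.extendDomain_apply_image unitsEquivNeZero u

theorem involutive_extendUnits {f : Perm G₀ˣ} (hf : f ^ 2 = 1) :
    Function.Involutive (extendUnits f) := fun a => by
  rw [← Equiv.Perm.mul_apply, ← sq, extendUnits, ← Equiv.Perm.extendDomain_pow, hf,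
    Equiv.Perm.extendDomain_one, Equiv.Perm.one_apply]

theorem exists_extendUnits_eq {g : G₀ → G₀} (hg0 : g 0 = 0) (hg : Function.Involutive g) :
    ∃ f : Perm G₀ˣ, f ^ 2 = 1 ∧ extendUnits f = g := by
  have hne (u : G₀ˣ) : g u ≠ 0 := fun h => u.ne_zero (hg.injective (h.trans hg0.symm))
  have hinv : Function.Involutive fun u : G₀ˣ => Units.mk0 (g u) (hne u) :=
    fun u => Units.ext (hg u)
  refine ⟨hinv.toPerm _, sq (hinv.toPerm _) ▸ Equiv.ext hinv, funext fun a => ?_⟩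
  obtain rfl | ha := eq_or_ne a 0
  · rw [extendUnits_zero, hg0]
  · exact extendUnits_val _ (Units.mk0 a ha)

theorem extendUnits_mul_iff {f f' : Perm G₀ˣ} {c : G₀ˣ} :
    (∀ a, extendUnits f' (c * a) = c * extendUnits f a) ↔
      MulAction.toPermHom _ _ c * f = f' * MulAction.toPermHom _ _ c := by
  have on_units (u : G₀ˣ) :
      extendUnits f' (c * u) = c * extendUnits f u ↔ c * f u = f' (c * u) := by
    rw [← Units.val_mul, extendUnits_val, extendUnits_val, ← Units.val_mul, Units.val_inj, eq_comm]
  refine ⟨fun h => Equiv.ext fun u => (on_units u).1 (h u), fun h a => ?_⟩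
  obtain rfl | ha := eq_or_ne a 0
  · rw [mul_zero, extendUnits_zero, extendUnits_zero, mul_zero]
  · exact (on_units (Units.mk0 a ha)).2 (Equiv.ext_iff.1 h _)

end ExtendUnits

section LoopClass

variable {A B : Type*}

/-- The conjugacy class, in the symmetric group of `B`, of a set of permutations of `A` transported
to `B` along a bijection. -/
def loopClass (E : A ≃ B) (S : Set (Perm A)) :
    Quotient (MulAction.orbitRel (ConjAct (Perm B)) (Set (Perm B))) :=
  Quotient.mk _ (E.permCongr '' S)

theorem mk_eq_loopClass_iff {E : A ≃ B} {T : Set (Perm B)}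
    {S : Set (Perm A)} : Quotient.mk _ T = loopClass E S ↔ LoopIso T S := by
  have hE : LoopIso S (E.permCongr '' S) := ⟨E, rfl⟩
  rw [loopClass, Quotient.eq, orbitRel_conjAct_iff_loopIso]
  exact ⟨fun h => (hE.trans h).symm, fun h => (h.trans hE).symm⟩

theorem loopClass_eq_iff {E : A ≃ B} {S S' : Set (Perm A)} :
    loopClass E S = loopClass E S' ↔ LoopIso S S' :=
  have hE : LoopIso S (E.permCongr '' S) := ⟨E, rfl⟩
  mk_eq_loopClass_iff.trans ⟨hE.trans, hE.symm.trans⟩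

end LoopClass

section Classes

variable {p : ℕ} [Fact p.Prime]

/-- The RCC loop `involutionLoop g k` for `x = (f, k)`, where `g` extends `f` by `g 0 = 0`. -/
def InvolutionParam.loop (x : InvolutionParam p) : Set (Perm (ZMod p × Bool)) :=
  involutionLoop (extendUnits x.1.1) x.2

theorem InvolutionParam.isRCC_loop (x : InvolutionParam p) : IsRCC x.loop :=
  isRCC_involutionLoop (extendUnits_zero _) (involutive_extendUnits x.1.2) _

theorem InvolutionParam.loopIso_loop_iff (x y : InvolutionParam p) :
    LoopIso x.loop y.loop ↔ MulAction.orbitRel (ZMod p)ˣ (InvolutionParam p) x y := by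
  rw [Setoid.comm', MulAction.orbitRel_apply, MulAction.mem_orbit_iff]
  refine (loopIso_involutionLoop_iff (extendUnits_zero _) (involutive_extendUnits x.1.2)
    (extendUnits_zero _) (involutive_extendUnits y.1.2)).trans ?_
  simp only [InvolutionParam.smul_eq_iff, ← extendUnits_mul_iff]
  refine ⟨fun ⟨r, hr, hf, hk⟩ => ⟨Units.mk0 r hr, hf, hk.symm⟩, fun ⟨c, hf, hk⟩ => ?_⟩
  exact ⟨c, c.ne_zero, hf, hk.symm⟩

theorem InvolutionParam.exists_loop_eq {g : ZMod p → ZMod p} (hg0 : g 0 = 0)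
    (hg : Function.Involutive g) (k : ZMod p) :
    ∃ x : InvolutionParam p, x.loop = involutionLoop g k := by
  obtain ⟨f, hf, rfl⟩ := exists_extendUnits_eq hg0 hg
  exact ⟨(⟨f, hf⟩, k), rfl⟩

theorem card_ne_zero_and_ne_neg_one :
    Nat.card {m : ZMod p // m ≠ 0 ∧ m ≠ -1} = p - 2 := by
  have hcompl : (Finset.univ.filter fun m : ZMod p => m ≠ 0 ∧ m ≠ -1) = {0, -1}ᶜ := by
    ext m
    simp
  rw [Nat.card_eq_fintype_card, Fintype.card_subtype, hcompl, Finset.card_compl,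
    Finset.card_pair (neg_ne_zero.2 one_ne_zero).symm, ZMod.card]

variable {X : Type*}

theorem image_setOf_isRCC (E : ZMod p × Bool ≃ X) :
    Quotient.mk (MulAction.orbitRel (ConjAct (Perm X)) (Set (Perm X))) '' {T | IsRCC T} =
      Set.range (fun m : {m : ZMod p // m ≠ 0 ∧ m ≠ -1} => loopClass E (scalarLoop m.1)) ∪
        Set.range fun x : InvolutionParam p => loopClass E x.loop := by
  have hX : Nat.card X = 2 * p := by
    rw [← Nat.card_congr E, Nat.card_prod, Nat.card_zmod, Nat.card_eq_fintype_card,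
      Fintype.card_bool, mul_comm]
  refine subset_antisymm ?_ (Set.union_subset ?_ ?_)
  · rintro _ ⟨T, hT, rfl⟩
    obtain ⟨m, hm, hm1, hTm⟩ | ⟨g, k, hg0, hg, hTg⟩ :=
      IsRCC.loopIso_scalarLoop_or_involutionLoop hT hX
    · exact Or.inl ⟨⟨m, hm, hm1⟩, (mk_eq_loopClass_iff.2 hTm).symm⟩
    · obtain ⟨x, hx⟩ := InvolutionParam.exists_loop_eq hg0 hg k
      exact Or.inr ⟨x, (mk_eq_loopClass_iff.2 (hx ▸ hTg)).symm⟩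
  · rintro _ ⟨m, rfl⟩
    exact ⟨_, (isRCC_scalarLoop m.2.1).image E, rfl⟩
  · rintro _ ⟨x, rfl⟩
    exact ⟨_, x.isRCC_loop.image E, rfl⟩

theorem ncard_image_setOf_isRCC (E : ZMod p × Bool ≃ X) :
    (Quotient.mk (MulAction.orbitRel (ConjAct (Perm X)) (Set (Perm X))) ''
      {T | IsRCC T}).ncard =
      p - 2 + Nat.card (Quotient (MulAction.orbitRel (ZMod p)ˣ (InvolutionParam p))) := by
  have scalar_injective : Function.Injective
      fun m : {m : ZMod p // m ≠ 0 ∧ m ≠ -1} => loopClass E (scalarLoop m.1) :=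
    fun m m' h => Subtype.ext (eq_of_loopIso_scalarLoop m.2.1 m'.2.1 (loopClass_eq_iff.1 h))
  have disjoint_ranges : Disjoint
      (Set.range fun m : {m : ZMod p // m ≠ 0 ∧ m ≠ -1} => loopClass E (scalarLoop m.1))
      (Set.range fun x : InvolutionParam p => loopClass E x.loop) := by
    rw [Set.disjoint_left]
    rintro _ ⟨m, rfl⟩ ⟨x, h⟩
    exact not_loopIso_scalarLoop_involutionLoop m.2.1 m.2.2 (extendUnits_zero _)
      (involutive_extendUnits x.1.2) (loopClass_eq_iff.1 h.symm)
  rw [image_setOf_isRCC E,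
    Set.ncard_union_eq disjoint_ranges (Set.finite_range _) (Set.finite_range _),
    Set.ncard_range_of_injective scalar_injective, card_ne_zero_and_ne_neg_one,
    ncard_range_eq_card_quotient fun x y => loopClass_eq_iff.trans (x.loopIso_loop_iff y)]

end Classes

/-- The number of isomorphism classes of RCC loops of order `2p` (encoded as sharply
transitive, self-conjugacy-closed subsets of `Sym(X)` containing the identity, up to
conjugacy in `Sym(X)`) equals `p - 2 + I_{p-1} + (1/(p-1))·Σ_{d=1}^{p-1} I_{p-1,d}`. -/
theorem stmt_4 (p : ℕ) (hp : p.Prime) (X : Type*) [Fintype X]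
    (hX : Fintype.card X = 2 * p) :
    (p - 1) *
      (Set.image (Quotient.mk (MulAction.orbitRel (ConjAct (Equiv.Perm X)) (Set (Equiv.Perm X))))
        {T : Set (Equiv.Perm X) | (1 : Equiv.Perm X) ∈ T ∧
          (∀ i j : X, ∃! t, t ∈ T ∧ t i = j) ∧
          (∀ s ∈ T, ∀ t ∈ T, t⁻¹ * s * t ∈ T)}).ncard =
    (p - 1) * (p - 2) + (p - 1) * Icd (p - 1) (p - 1) +
      ∑ d ∈ Finset.Icc 1 (p - 1), Icd (p - 1) d := by
  have := Fact.mk hp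
  have hset : {T : Set (Perm X) | (1 : Perm X) ∈ T ∧ (∀ i j : X, ∃! t, t ∈ T ∧ t i = j) ∧
      (∀ s ∈ T, ∀ t ∈ T, t⁻¹ * s * t ∈ T)} = {T | IsRCC T} :=
    Set.ext fun T => ⟨fun ⟨h1, h2, h3⟩ => ⟨h1, h2, h3⟩, fun ⟨h1, h2, h3⟩ => ⟨h1, h2, h3⟩⟩
  obtain ⟨E⟩ : Nonempty (ZMod p × Bool ≃ X) := by
    rw [← Fintype.card_eq, hX, Fintype.card_prod, ZMod.card, Fintype.card_bool, mul_comm]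
  rw [hset, ncard_image_setOf_isRCC E, mul_add, InvolutionParam.card_orbits, add_assoc]
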